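/- arXiv:2603.27379 — 2 statements merged into one kernel-verified Lean document; each statement's English description precedes it below -/
import Mathlib

section
/- Let d ≥ 2, let m ≥ 1 be an integer, let s ≥ 1, and let θ_1,…,θ_s ∈ 𝕋^d be distinct points with Δ(ϑ) ≥ β/m for some β ≥ π d^{3/2}/log 2. Then the real symmetric s×s kernel matrix K_ϑ := [D_m(θ_j − θ_k)]_{j,k=1}^s (well-defined since D_m is ℤ^d-periodic) satisfies 1 − d^{3/2}/β ≤ λ_min(K_ϑ) ≤ λ_max(K_ϑ) ≤ 1 + d^{3/2}/β, where λ_min and λ_max denote the smallest and largest eigenvalues. -/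
noncomputable section

open Real

/-- The normalized one-dimensional Dirichlet kernel
`d_m(t) = (2m+1)⁻¹ ∑_{k=-m}^{m} e^{2πikt}`, written via its (equal) real form. -/
def dirKer (m : ℕ) (t : ℝ) : ℝ :=
  (2 * m + 1 : ℝ)⁻¹ * ∑ k ∈ Finset.Icc (-(m : ℤ)) (m : ℤ), Real.cos (2 * Real.pi * k * t)

/-- The square (tensor-product) Dirichlet kernel `D_m(ξ) = ∏ i d_m(ξ i)` on `ℝ^d`;
it is `ℤ^d`-periodic, hence well-defined on the torus `𝕋^d`. -/
def sqDirKer (d m : ℕ) (ξ : EuclideanSpace ℝ (Fin d)) : ℝ :=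
  ∏ i, dirKer m (ξ i)

/-- The (Euclidean quotient) torus distance on `𝕋^d = ℝ^d/ℤ^d`, in terms of
representatives: `|x - y| = min_{n ∈ ℤ^d} |x - y + n|`. -/
def torusDist {d : ℕ} (x y : EuclideanSpace ℝ (Fin d)) : ℝ :=
  ⨅ n : Fin d → ℤ, ‖x - y + ∑ i, ((n i : ℝ)) • EuclideanSpace.single i (1 : ℝ)‖

/-!
Selberg's extremal function majorizes the indicator of the frequency window `[-m, m]`, exceeds it by
at most a second, explicit function, and both have Fourier transforms supported in an interval.
By Poisson summation they are the Fourier coefficients of periodic kernels which vanish at distance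
at least `L / (2m+1)` from the integers and take the values `1 + 1/L` and `2/L` at `0`. In every
coordinate, pointwise inequalities between Fourier coefficients are Loewner inequalities between
kernel matrices, and the Schur product theorem carries these over to the tensor products.
Points at distance `β / m` on the torus differ by at least `β / (m √d)` in some coordinate; with `L`
the integer part of `(2m+1) β / (m √d)`, the comparison matrices are therefore multiples of the
identity, and the multiples are within `d^{3/2} / β` of `1`.
-/

open Filter FourierTransform MeasureTheory Topology

/-- The Fejér-type kernel `(sin πz / πz)²`, with value `1` at `z = 0`: the building block of
Selberg's majorant. -/
def sincSq (z : ℝ) : ℝ :=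
  sinc (π * z) ^ 2

lemma sincSq_zero : sincSq 0 = 1 := by
  simp [sincSq]

lemma sincSq_neg (z : ℝ) : sincSq (-z) = sincSq z := by
  rw [sincSq, mul_neg, sinc_neg, sincSq]

lemma sincSq_nonneg (z : ℝ) : 0 ≤ sincSq z :=
  sq_nonneg _

lemma sq_mul_sincSq (z : ℝ) : z ^ 2 * sincSq z = (sin (π * z) / π) ^ 2 := by
  rcases eq_or_ne z 0 with rfl | hz
  · simp
  · rw [sincSq, sinc_of_ne_zero (mul_ne_zero pi_ne_zero hz)]
    field_simp

lemma sq_mul_sincSq_add_one (z : ℝ) : (z + 1) ^ 2 * sincSq (z + 1) = z ^ 2 * sincSq z := by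
  rw [sq_mul_sincSq, sq_mul_sincSq, mul_add_one, sin_add_pi, neg_div, neg_sq]

lemma sq_mul_sincSq_le_one (z : ℝ) : z ^ 2 * sincSq z ≤ 1 := by
  rw [sq_mul_sincSq, div_pow]
  have hπ : 1 ≤ π ^ 2 := one_le_pow₀ (by linarith [pi_gt_three])
  exact div_le_one_of_le₀ ((sin_sq_le_one _).trans hπ) (by positivity)

lemma integral_exp_two_pi_mul (w : ℝ) :
    ∫ t in (-(1 / 2) : ℝ)..1 / 2, Complex.exp ((2 * π * w * t : ℝ) * Complex.I) =
      sinc (π * w) := by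
  rcases eq_or_ne w 0 with rfl | hw
  · norm_num
  · have hc : 2 * π * w ≠ 0 := by positivity
    rw [intervalIntegral.integral_comp_mul_left
        (fun t : ℝ ↦ Complex.exp ((t : ℂ) * Complex.I)) hc,
      show 2 * π * w * -(1 / 2) = -(π * w) by ring, show 2 * π * w * (1 / 2) = π * w by ring,
      integral_exp_mul_I_eq_sinc, Complex.real_smul]
    have hw' : (w : ℂ) ≠ 0 := by exact_mod_cast hw
    push_cast
    field_simp

lemma fourierCoeffOn_exp_two_pi_mul (z : ℝ) (n : ℤ) :
    fourierCoeffOn (show (-(1 / 2) : ℝ) < 1 / 2 by norm_num)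
      (fun t ↦ Complex.exp ((2 * π * z * t : ℝ) * Complex.I)) n = sinc (π * (z - n)) := by
  have hchar (t : ℝ) : fourier (-n) (t : AddCircle (1 / 2 - -(1 / 2) : ℝ)) •
      Complex.exp ((2 * π * z * t : ℝ) * Complex.I) =
        Complex.exp ((2 * π * (z - n) * t : ℝ) * Complex.I) := by
    rw [fourier_coe_apply, smul_eq_mul, ← Complex.exp_add]
    congr 1
    push_cast
    ring
  simp only [fourierCoeffOn_eq_integral, hchar, integral_exp_two_pi_mul]
  norm_num

lemma hasSum_sincSq_sub_intCast (z : ℝ) : HasSum (fun n : ℤ ↦ sincSq (z - n)) 1 := by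
  have h := hasSum_sq_fourierCoeffOn (show (-(1 / 2) : ℝ) < 1 / 2 by norm_num)
    (f := fun t ↦ Complex.exp ((2 * π * z * t : ℝ) * Complex.I))
    (MemLp.of_bound (Continuous.aestronglyMeasurable (by fun_prop)) 1
      (.of_forall fun t ↦ (Complex.norm_exp_ofReal_mul_I _).le))
  simp only [fourierCoeffOn_exp_two_pi_mul, Complex.norm_real, Complex.norm_exp_ofReal_mul_I] at h
  norm_num at h
  exact h

lemma summable_sincSq_mul_intCast_add {δ : ℝ} (hδ : 0 < δ) (c : ℝ) :
    Summable (fun k : ℤ ↦ sincSq (δ * k + c)) := by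
  have hmaj := ((summable_one_div_int_add_rpow (c / δ) 2).mpr one_lt_two).mul_left ((δ ^ 2)⁻¹)
  refine hmaj.of_norm_bounded_eventually ?_
  have hfin : {k : ℤ | (k : ℝ) = -(c / δ)}.Finite :=
    Set.Subsingleton.finite fun a ha b hb ↦ Int.cast_injective (ha.trans hb.symm)
  filter_upwards [hfin.compl_mem_cofinite] with k hk
  have hk0 : (k : ℝ) + c / δ ≠ 0 := fun h ↦ hk (eq_neg_of_add_eq_zero_left h)
  have hfactor : δ * k + c = δ * (k + c / δ) := by field_simp
  rw [norm_of_nonneg (sincSq_nonneg _), rpow_two, sq_abs, hfactor, ← one_div, one_div_mul_one_div,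
    ← mul_pow, le_div_iff₀ (by positivity), mul_comm]
  exact sq_mul_sincSq_le_one _

/-! ### Selberg's majorant -/

lemma sincSq_add_one_le {z : ℝ} (hz : 0 < z) :
    sincSq (z + 1) ≤ z * sincSq z - (z + 1) * sincSq (z + 1) := by
  have h := sq_mul_sincSq_add_one z
  have := sincSq_nonneg (z + 1)
  have : 0 ≤ z * (z * sincSq z - (z + 1) * sincSq (z + 1) - sincSq (z + 1)) := by nlinarith
  linarith [nonneg_of_mul_nonneg_right this hz]

lemma mul_sincSq_sub_le {z : ℝ} (hz : 0 < z) :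
    z * sincSq z - (z + 1) * sincSq (z + 1) ≤ sincSq z := by
  have h := sq_mul_sincSq_add_one z
  have := sincSq_nonneg z
  have : 0 ≤ (z + 1) * (sincSq z - (z * sincSq z - (z + 1) * sincSq (z + 1))) := by nlinarith
  linarith [nonneg_of_mul_nonneg_right this (by linarith)]

lemma sum_range_mul_sincSq_sub (z : ℝ) (R : ℕ) :
    ∑ n ∈ Finset.range R,
        ((z + n) * sincSq (z + n) - (z + n + 1) * sincSq (z + n + 1)) =
      z * sincSq z - (z + R) * sincSq (z + R) := by
  simpa [add_assoc] using
    Finset.sum_range_sub' (fun n : ℕ ↦ (z + n) * sincSq (z + n)) R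

lemma sum_range_sincSq_add_one_le {z : ℝ} (hz : 0 < z) (R : ℕ) :
    ∑ n ∈ Finset.range R, sincSq (z + n + 1) ≤ z * sincSq z - (z + R) * sincSq (z + R) := by
  rw [← sum_range_mul_sincSq_sub]
  exact Finset.sum_le_sum fun n _ ↦ sincSq_add_one_le (by positivity)

lemma le_sum_range_sincSq {z : ℝ} (hz : 0 < z) (R : ℕ) :
    z * sincSq z - (z + R) * sincSq (z + R) ≤ ∑ n ∈ Finset.range R, sincSq (z + n) := by
  rw [← sum_range_mul_sincSq_sub]
  exact Finset.sum_le_sum fun n _ ↦ mul_sincSq_sub_le (by positivity)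

lemma summable_sincSq_add_natCast (z : ℝ) : Summable (fun n : ℕ ↦ sincSq (z + n)) := by
  simpa [Function.comp_def, add_comm] using
    (summable_sincSq_mul_intCast_add one_pos z).comp_injective Nat.cast_injective

lemma tendsto_add_mul_sincSq_atTop {z : ℝ} (hz : 0 < z) :
    Tendsto (fun R : ℕ ↦ (z + R) * sincSq (z + R)) atTop (𝓝 0) := by
  have hinv : Tendsto (fun R : ℕ ↦ (z + R)⁻¹) atTop (𝓝 0) :=
    tendsto_inv_atTop_zero.comp (tendsto_atTop_add_const_left _ z tendsto_natCast_atTop_atTop)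
  refine squeeze_zero (fun R ↦ mul_nonneg (by positivity) (sincSq_nonneg _)) (fun R ↦ ?_) hinv
  have hzR : 0 < z + R := by positivity
  rw [← one_div, le_div_iff₀ hzR]
  linarith [sq_mul_sincSq_le_one (z + R)]

lemma tsum_sincSq_add_one_le {z : ℝ} (hz : 0 < z) :
    ∑' n : ℕ, sincSq (z + n + 1) ≤ z * sincSq z := by
  refine tsum_le_of_sum_range_le (fun n ↦ sincSq_nonneg _) fun R ↦ ?_
  have := mul_nonneg (by positivity : 0 ≤ z + R) (sincSq_nonneg (z + R))
  linarith [sum_range_sincSq_add_one_le hz R]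

lemma mul_sincSq_le_tsum {z : ℝ} (hz : 0 < z) :
    z * sincSq z ≤ sincSq z + ∑' n : ℕ, sincSq (z + n + 1) := by
  have htsum : ∑' n : ℕ, sincSq (z + n) = sincSq z + ∑' n : ℕ, sincSq (z + n + 1) := by
    simpa [add_assoc] using (summable_sincSq_add_natCast z).tsum_eq_zero_add
  have hlim := (tendsto_add_mul_sincSq_atTop hz).add_const (∑' n : ℕ, sincSq (z + n))
  rw [zero_add, htsum] at hlim
  refine ge_of_tendsto' hlim fun R ↦ ?_
  have := (summable_sincSq_add_natCast z).sum_le_tsum (Finset.range R)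
    fun n _ ↦ sincSq_nonneg (z + n)
  linarith [le_sum_range_sincSq hz R]

lemma sum_range_sincSq_add_tsum (L : ℕ) (y : ℝ) :
    ∑ n ∈ Finset.range (L + 1), sincSq (y - (n - L / 2)) +
      ∑' n : ℕ, sincSq (L / 2 - y + n + 1) + ∑' n : ℕ, sincSq (L / 2 + y + n + 1) = 1 := by
  have hright (n : ℕ) : sincSq (L / 2 - y + n + 1) = sincSq (y + L / 2 - (n + (L + 1) : ℕ)) := by
    rw [← sincSq_neg]
    congr 1
    push_cast
    ring
  have hleft (n : ℕ) : sincSq (L / 2 + y + n + 1) = sincSq (y + L / 2 - (-(n + 1) : ℤ)) := by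
    congr 1
    push_cast
    ring
  have hsum := hasSum_sincSq_sub_intCast (y + L / 2)
  have hnat : Summable fun n : ℕ ↦ sincSq (y + L / 2 - (n : ℤ)) :=
    hsum.summable.comp_injective Nat.cast_injective
  have hneg : Summable fun n : ℕ ↦ sincSq (y + L / 2 - (-(n + 1) : ℤ)) :=
    hsum.summable.comp_injective fun a b h ↦ by simpa using h
  refine Eq.trans ?_ hsum.tsum_eq
  rw [tsum_of_nat_of_neg_add_one (f := fun n : ℤ ↦ sincSq (y + L / 2 - n)) hnat hneg,
    ← hnat.sum_add_tsum_nat_add (L + 1)]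
  simp only [hright, hleft, Int.cast_natCast, sub_sub_eq_add_sub]

/-- Selberg's majorant of the indicator function of `[-L/2, L/2]`, as its interpolation series:
the function of exponential type `2π` with value `1` at the nodes `n - L/2`, `0 ≤ n ≤ L`, and `0` at
the other integer translates, with slope `1` at `-L/2`, `-1` at `L/2` and `0` at the other nodes. -/
def selbergMajorant (L : ℕ) (y : ℝ) : ℝ :=
  ∑ n ∈ Finset.range (L + 1), sincSq (y - (n - L / 2)) +
    ((y + L / 2) * sincSq (y + L / 2) - (y - L / 2) * sincSq (y - L / 2))

/-- The bound for the excess of `selbergMajorant L` over the indicator function of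
`[-L/2, L/2]`. -/
def selbergError (L : ℕ) (y : ℝ) : ℝ :=
  sincSq (y + L / 2) + sincSq (y - L / 2)

lemma selbergError_neg (L : ℕ) (y : ℝ) : selbergError L (-y) = selbergError L y := by
  rw [selbergError, selbergError, show -y + L / 2 = -(y - L / 2) by ring,
    show -y - L / 2 = -(y + L / 2) by ring, sincSq_neg, sincSq_neg, add_comm]

lemma selbergError_abs (L : ℕ) (y : ℝ) : selbergError L |y| = selbergError L y := by
  rcases abs_choice y with h | h
  · rw [h]
  · rw [h, selbergError_neg]

lemma selbergMajorant_eq_one_add (L : ℕ) (y : ℝ) :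
    selbergMajorant L y =
      1 + ((L / 2 + y) * sincSq (L / 2 + y) - ∑' n : ℕ, sincSq (L / 2 + y + n + 1)) +
        ((L / 2 - y) * sincSq (L / 2 - y) - ∑' n : ℕ, sincSq (L / 2 - y + n + 1)) := by
  rw [selbergMajorant, ← sincSq_neg (y - L / 2), neg_sub, add_comm y]
  linarith [sum_range_sincSq_add_tsum L y]

lemma one_le_selbergMajorant {L : ℕ} {y : ℝ} (hy : |y| < L / 2) : 1 ≤ selbergMajorant L y := by
  obtain ⟨hl, hr⟩ := abs_lt.mp hy
  rw [selbergMajorant_eq_one_add]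
  linarith [tsum_sincSq_add_one_le (by linarith : 0 < L / 2 + y),
    tsum_sincSq_add_one_le (by linarith : 0 < L / 2 - y)]

lemma selbergMajorant_le_one_add {L : ℕ} {y : ℝ} (hy : |y| < L / 2) :
    selbergMajorant L y ≤ 1 + selbergError L y := by
  obtain ⟨hl, hr⟩ := abs_lt.mp hy
  rw [selbergMajorant_eq_one_add, selbergError, add_comm y, ← sincSq_neg (y - L / 2), neg_sub]
  linarith [mul_sincSq_le_tsum (by linarith : 0 < L / 2 + y),
    mul_sincSq_le_tsum (by linarith : 0 < L / 2 - y)]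

lemma sum_range_comp_sub_half (f : ℝ → ℝ) (L : ℕ) :
    ∑ n ∈ Finset.range (L + 1), f (n - L / 2) = ∑ n ∈ Finset.range (L + 1), f (L / 2 - n) := by
  rw [← Finset.sum_range_reflect]
  refine Finset.sum_congr rfl fun n hn ↦ ?_
  rw [Nat.add_sub_cancel, Nat.cast_sub (Finset.mem_range_succ_iff.mp hn)]
  congr 1
  ring

lemma selbergMajorant_neg (L : ℕ) (y : ℝ) : selbergMajorant L (-y) = selbergMajorant L y := by
  have hsum := sum_range_comp_sub_half (fun x ↦ sincSq (y - x)) L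
  have hneg (n : ℕ) : sincSq (-y - (n - L / 2)) = sincSq (y - (L / 2 - n)) := by
    rw [← sincSq_neg]
    congr 1
    ring
  simp only [selbergMajorant, hneg, hsum]
  rw [show -y + L / 2 = -(y - L / 2) by ring, show -y - L / 2 = -(y + L / 2) by ring,
    sincSq_neg, sincSq_neg]
  ring

lemma selbergMajorant_abs (L : ℕ) (y : ℝ) : selbergMajorant L |y| = selbergMajorant L y := by
  rcases abs_choice y with h | h
  · rw [h]
  · rw [h, selbergMajorant_neg]

lemma selbergMajorant_add_half (L : ℕ) (w : ℝ) :
    selbergMajorant L (w + L / 2) = ∑ n ∈ Finset.range (L + 1), sincSq (w + n) -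
      (w * sincSq w - (w + L) * sincSq (w + L)) := by
  have hsum := sum_range_comp_sub_half (fun x ↦ sincSq (w + L / 2 - x)) L
  have hshift (n : ℕ) : w + (L : ℝ) / 2 - (L / 2 - n) = w + n := by ring
  simp only [hshift] at hsum
  rw [selbergMajorant, hsum]
  ring_nf

lemma selbergMajorant_nonneg {L : ℕ} {y : ℝ} (hy : L / 2 < |y|) : 0 ≤ selbergMajorant L y := by
  have hw : 0 < |y| - L / 2 := sub_pos.mpr hy
  rw [← selbergMajorant_abs, ← sub_add_cancel |y| (L / 2 : ℝ), selbergMajorant_add_half,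
    Finset.sum_range_succ]
  linarith [le_sum_range_sincSq hw L, sincSq_nonneg (|y| - L / 2 + L)]

lemma selbergMajorant_le_selbergError {L : ℕ} {y : ℝ} (hy : L / 2 < |y|) :
    selbergMajorant L y ≤ selbergError L y := by
  have hw : 0 < |y| - L / 2 := sub_pos.mpr hy
  have hsum := sum_range_sincSq_add_one_le hw L
  rw [← selbergMajorant_abs, ← selbergError_abs, selbergError,
    ← sub_add_cancel |y| (L / 2 : ℝ), selbergMajorant_add_half, Finset.sum_range_succ']
  simp only [Nat.cast_add, Nat.cast_one, Nat.cast_zero, add_zero, ← add_assoc,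
    add_sub_cancel_right]
  linarith [sincSq_nonneg (|y| - L / 2 + L / 2 + L / 2)]

/-! ### Cosine transforms and Poisson summation -/

/-- The cosine transform of a profile on `[0, 1]`: the Fourier transform of its even extension to
`[-1, 1]`. -/
def cosTransform (Φ : ℝ → ℝ) (y : ℝ) : ℝ :=
  2 * ∫ u in (0 : ℝ)..1, Φ u * cos (2 * π * y * u)

/-- The even extension to `ℝ` of a profile on `[0, 1]`. Truncating `|t|` at `1` extends by the
constant `Φ 1`, hence by zero for the profiles with `Φ 1 = 0` to which it is applied. -/
def evenExtension (Φ : ℝ → ℝ) (t : ℝ) : ℝ :=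
  Φ (min |t| 1)

/-- The `1`-periodization of the even extension of `Φ`, rescaled to be supported in `[-δ, δ]` with
unchanged integral; it is the physical side of the Poisson summation formula. -/
def periodization (Φ : ℝ → ℝ) (δ t : ℝ) : ℝ :=
  ∑' n : ℤ, δ⁻¹ * evenExtension Φ ((t + n) / δ)

section CosineTransform

variable {Φ : ℝ → ℝ} {δ : ℝ}

lemma evenExtension_of_one_le_abs (hΦ₁ : Φ 1 = 0) {t : ℝ} (ht : 1 ≤ |t|) :
    evenExtension Φ t = 0 := by
  rw [evenExtension, min_eq_right ht, hΦ₁]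

lemma continuous_evenExtension (hΦ : Continuous Φ) : Continuous (evenExtension Φ) := by
  unfold evenExtension
  fun_prop

lemma hasCompactSupport_evenExtension (hΦ₁ : Φ 1 = 0) : HasCompactSupport (evenExtension Φ) :=
  .intro (isCompact_Icc (a := -1) (b := 1)) fun _ ht ↦
    evenExtension_of_one_le_abs hΦ₁ (not_lt.mp fun h ↦ ht (abs_le.mp h.le))

lemma fourier_ofReal_of_even {f : ℝ → ℝ} (hf : Integrable f)
    (heven : ∀ t, f (-t) = f t) (y : ℝ) :
    𝓕 (fun t ↦ (f t : ℂ)) y = (∫ t, f t * cos (2 * π * y * t) : ℝ) := by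
  have hcos : Integrable fun t ↦ f t * cos (2 * π * y * t) :=
    hf.mul_bdd (c := 1) (by fun_prop) (.of_forall fun t ↦ abs_cos_le_one _)
  have hsin : Integrable fun t ↦ f t * sin (2 * π * y * t) :=
    hf.mul_bdd (c := 1) (by fun_prop) (.of_forall fun t ↦ abs_sin_le_one _)
  have hodd : ∫ t, f t * sin (2 * π * y * t) = 0 := by
    have h := integral_neg_eq_self (fun t ↦ f t * sin (2 * π * y * t))
      volume
    simp only [heven, mul_neg, sin_neg, integral_neg] at h
    linarith
  have hexp (t : ℝ) : Complex.exp ((-2 * π * t * y : ℝ) * Complex.I) • (f t : ℂ) =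
      (f t * cos (2 * π * y * t) : ℝ) + (f t * sin (2 * π * y * t) : ℝ) * -Complex.I := by
    rw [Complex.exp_mul_I, ← Complex.ofReal_cos, ← Complex.ofReal_sin,
      show -2 * π * t * y = -(2 * π * y * t) by ring, cos_neg, sin_neg, smul_eq_mul]
    push_cast
    ring
  rw [fourier_real_eq_integral_exp_smul]
  simp_rw [hexp]
  rw [integral_add hcos.ofReal (hsin.ofReal.mul_const _),
    integral_mul_const, integral_complex_ofReal, integral_complex_ofReal, hodd]
  simp

lemma fourier_inv_mul_comp_div (hδ : 0 < δ) (f : ℝ → ℂ) (y : ℝ) :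
    𝓕 (fun t ↦ (δ⁻¹ : ℂ) * f (t / δ)) y =
      𝓕 f (δ * y) := by
  have hscale (t : ℝ) : Complex.exp ((-2 * π * t * y : ℝ) * Complex.I) • ((δ⁻¹ : ℂ) * f (t / δ)) =
      δ⁻¹ • Complex.exp ((-2 * π * (t / δ) * (δ * y) : ℝ) * Complex.I) • f (t / δ) := by
    rw [show -2 * π * (t / δ) * (δ * y) = -2 * π * t * y by field_simp, Complex.real_smul,
      Complex.ofReal_inv, smul_eq_mul, smul_eq_mul, mul_left_comm]
  simp only [fourier_real_eq_integral_exp_smul, hscale]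
  rw [integral_smul, Measure.integral_comp_div
    (fun t ↦ Complex.exp ((-2 * π * t * (δ * y) : ℝ) * Complex.I) • f t), abs_of_pos hδ,
    inv_smul_smul₀ hδ.ne']

lemma integral_evenExtension_mul_cos (hΦ₁ : Φ 1 = 0) (y : ℝ) :
    ∫ t, evenExtension Φ t * cos (2 * π * y * t) = cosTransform Φ y := by
  have heven (t : ℝ) : evenExtension Φ t * cos (2 * π * y * t) =
      evenExtension Φ |t| * cos (2 * π * y * |t|) := by
    rw [evenExtension, evenExtension, abs_abs]
    rcases abs_choice t with h | h <;> simp only [h, mul_neg, cos_neg]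
  have hhalf : ∫ t in Set.Ioi 0, evenExtension Φ t * cos (2 * π * y * t) =
      ∫ t in Set.Ioc 0 1, evenExtension Φ t * cos (2 * π * y * t) :=
    setIntegral_eq_of_subset_of_forall_sdiff_eq_zero measurableSet_Ioi
      Set.Ioc_subset_Ioi_self fun t ⟨ht, ht'⟩ ↦ by
        rw [evenExtension_of_one_le_abs hΦ₁, zero_mul]
        exact (not_le.mp fun h ↦ ht' ⟨ht, h⟩).le.trans (le_abs_self t)
  rw [integral_congr_ae (.of_forall heven),
    integral_comp_abs (f := fun t ↦ evenExtension Φ t * cos (2 * π * y * t)), hhalf,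
    cosTransform, intervalIntegral.integral_of_le zero_le_one]
  congr 1
  refine setIntegral_congr_fun measurableSet_Ioc fun t ht ↦ ?_
  simp only [evenExtension, abs_of_pos ht.1, min_eq_left ht.2]

lemma fourier_rescaled_evenExtension (hΦ : Continuous Φ) (hΦ₁ : Φ 1 = 0) (hδ : 0 < δ) (y : ℝ) :
    𝓕 (fun t ↦ ((δ⁻¹ * evenExtension Φ (t / δ) : ℝ) : ℂ)) y =
      cosTransform Φ (δ * y) := by
  have hint : Integrable (evenExtension Φ) :=
    (continuous_evenExtension hΦ).integrable_of_hasCompactSupport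
      (hasCompactSupport_evenExtension hΦ₁)
  push_cast
  rw [fourier_inv_mul_comp_div hδ (fun t ↦ (evenExtension Φ t : ℂ)),
    fourier_ofReal_of_even hint fun t ↦ by simp only [evenExtension, abs_neg],
    integral_evenExtension_mul_cos hΦ₁]

lemma isBigO_rescaled_evenExtension (hΦ₁ : Φ 1 = 0) (hδ : 0 < δ) (b : ℝ) :
    (fun t ↦ ((δ⁻¹ * evenExtension Φ (t / δ) : ℝ) : ℂ)) =O[cocompact ℝ]
      fun t ↦ |t| ^ (-b) := by
  have hzero : (fun t ↦ ((δ⁻¹ * evenExtension Φ (t / δ) : ℝ) : ℂ)) =ᶠ[cocompact ℝ] 0 := by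
    filter_upwards [(isCompact_Icc (a := -δ) (b := δ)).compl_mem_cocompact] with t ht
    have hδt : δ ≤ |t| := not_lt.mp fun h ↦ ht (abs_le.mp h.le)
    rw [evenExtension_of_one_le_abs hΦ₁ (by rwa [abs_div, abs_of_pos hδ, one_le_div hδ]), mul_zero,
      Complex.ofReal_zero, Pi.zero_apply]
  exact hzero.trans_isBigO (Asymptotics.isBigO_zero _ _)

lemma hasSum_cosTransform_mul_cos (hΦ : Continuous Φ) (hΦ₁ : Φ 1 = 0) (hδ : 0 < δ)
    (hsum : Summable fun k : ℤ ↦ cosTransform Φ (δ * k)) (t : ℝ) :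
    HasSum (fun k : ℤ ↦ cosTransform Φ (δ * k) * cos (2 * π * k * t)) (periodization Φ δ t) := by
  have hfourier (k : ℤ) := fourier_rescaled_evenExtension hΦ hΦ₁ hδ k
  have hcont : Continuous fun t ↦ ((δ⁻¹ * evenExtension Φ (t / δ) : ℝ) : ℂ) :=
    Complex.continuous_ofReal.comp
      (((continuous_evenExtension hΦ).comp (continuous_id.div_const δ)).const_mul δ⁻¹)
  have hpoisson := Real.tsum_eq_tsum_fourier_of_rpow_decay_of_summable hcont one_lt_two
    (isBigO_rescaled_evenExtension hΦ₁ hδ 2)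
    (by simp only [hfourier]; exact_mod_cast hsum) t
  simp only [hfourier, ← Complex.ofReal_tsum] at hpoisson
  have hseries : Summable fun k : ℤ ↦
      (cosTransform Φ (δ * k) : ℂ) * fourier k (t : UnitAddCircle) := by
    refine .of_norm ?_
    simpa only [norm_mul, Complex.norm_real, fourier_apply, Circle.norm_coe, mul_one] using
      hsum.norm
  have hre := Complex.hasSum_re hseries.hasSum
  rw [← hpoisson, Complex.ofReal_re, ← periodization] at hre
  convert hre using 2 with k
  rw [fourier_coe_apply, Complex.re_ofReal_mul,
    show 2 * (π : ℂ) * Complex.I * k * t / (1 : ℝ) = (2 * π * k * t : ℝ) * Complex.I by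
      push_cast; ring, Complex.exp_ofReal_mul_I_re]

lemma periodization_eq_zero (hΦ₁ : Φ 1 = 0) (hδ : 0 < δ) {t : ℝ} (ht : ∀ n : ℤ, δ ≤ |t + n|) :
    periodization Φ δ t = 0 := by
  have hterm (n : ℤ) : evenExtension Φ ((t + n) / δ) = 0 :=
    evenExtension_of_one_le_abs hΦ₁ (by
      rw [abs_div, abs_of_pos hδ]
      exact (one_le_div hδ).mpr (ht n))
  simp only [periodization, hterm, mul_zero, tsum_zero]

lemma periodization_zero (hΦ₁ : Φ 1 = 0) (hδ : 0 < δ) (hδ₁ : δ ≤ 1) :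
    periodization Φ δ 0 = δ⁻¹ * Φ 0 := by
  rw [periodization, tsum_eq_single 0]
  · simp [evenExtension]
  · intro n hn
    have hn₁ : (1 : ℝ) ≤ |(n : ℝ)| := by exact_mod_cast Int.one_le_abs hn
    rw [evenExtension_of_one_le_abs hΦ₁, mul_zero]
    rw [zero_add, abs_div, abs_of_pos hδ]
    exact (one_le_div hδ).mpr (hδ₁.trans hn₁)

end CosineTransform

/-! ### The Fourier transform of Selberg's majorant -/

lemma cosTransform_add {Φ Ψ : ℝ → ℝ} (hΦ : Continuous Φ) (hΨ : Continuous Ψ) (y : ℝ) :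
    cosTransform (fun u ↦ Φ u + Ψ u) y = cosTransform Φ y + cosTransform Ψ y := by
  simp only [cosTransform, add_mul]
  rw [intervalIntegral.integral_add (Continuous.intervalIntegrable (by fun_prop) _ _)
    (Continuous.intervalIntegrable (by fun_prop) _ _), mul_add]

lemma cosTransform_sum {κ : Type*} (s : Finset κ) {Φ : κ → ℝ → ℝ} (hΦ : ∀ i, Continuous (Φ i))
    (y : ℝ) : cosTransform (fun u ↦ ∑ i ∈ s, Φ i u) y = ∑ i ∈ s, cosTransform (Φ i) y := by
  simp only [cosTransform, Finset.sum_mul]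
  rw [intervalIntegral.integral_finsetSum
    (fun _ _ ↦ Continuous.intervalIntegrable (by fun_prop) _ _), Finset.mul_sum]

lemma cosTransform_const_mul (c : ℝ) (Φ : ℝ → ℝ) (y : ℝ) :
    cosTransform (fun u ↦ c * Φ u) y = c * cosTransform Φ y := by
  simp only [cosTransform, mul_assoc, intervalIntegral.integral_const_mul, mul_left_comm]

lemma one_sub_cos_two_pi_mul (w : ℝ) :
    1 - cos (2 * π * w) = 2 * (π * w) ^ 2 * sincSq w := by
  have hsq : (π * w) ^ 2 * sincSq w = sin (π * w) ^ 2 := by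
    rw [mul_pow, mul_assoc, sq_mul_sincSq, div_pow]
    field_simp
  rw [mul_assoc 2 ((π * w) ^ 2), hsq, mul_assoc, cos_two_mul, cos_sq']
  ring

lemma hasDerivAt_two_pi_mul (w u : ℝ) : HasDerivAt (fun u ↦ 2 * π * w * u) (2 * π * w) u := by
  simpa using (hasDerivAt_id u).const_mul (2 * π * w)

lemma integral_sin_two_pi_mul (w : ℝ) :
    ∫ u in (0 : ℝ)..1, sin (2 * π * w * u) = π * (w * sincSq w) := by
  rcases eq_or_ne w 0 with rfl | hw
  · simp
  · rw [intervalIntegral.integral_comp_mul_left sin (by positivity), integral_sin, mul_zero,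
      cos_zero, mul_one, one_sub_cos_two_pi_mul, smul_eq_mul]
    field_simp

lemma integral_one_sub_mul_cos_two_pi_mul (w : ℝ) :
    ∫ u in (0 : ℝ)..1, (1 - u) * cos (2 * π * w * u) = sincSq w / 2 := by
  rcases eq_or_ne w 0 with rfl | hw
  · have h : ∫ u in (0 : ℝ)..1, (1 - u) = 1 / 2 := by
      rw [intervalIntegral.integral_sub (by simp) (by simp), integral_id]
      norm_num
    simpa [sincSq_zero] using h
  · have hc : 2 * π * w ≠ 0 := by positivity
    have hparts := intervalIntegral.integral_mul_deriv_eq_deriv_mul (a := 0) (b := 1)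
      (u := fun u ↦ 1 - u) (u' := fun _ ↦ -1)
      (v := fun u ↦ sin (2 * π * w * u) / (2 * π * w)) (v' := fun u ↦ cos (2 * π * w * u))
      (fun u _ ↦ (hasDerivAt_id u).const_sub 1)
      (fun u _ ↦ by simpa [hc] using (hasDerivAt_two_pi_mul w u).sin.div_const (2 * π * w))
      (Continuous.intervalIntegrable (by fun_prop) _ _)
      (Continuous.intervalIntegrable (by fun_prop) _ _)
    rw [hparts]
    simp only [intervalIntegral.integral_const_mul, intervalIntegral.integral_div,
      integral_sin_two_pi_mul]
    simp
    field_simp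

lemma cosTransform_one_sub_mul_cos (c y : ℝ) :
    cosTransform (fun u ↦ (1 - u) * cos (2 * π * c * u)) y =
      (sincSq (y + c) + sincSq (y - c)) / 2 := by
  have hprod (u : ℝ) : (1 - u) * cos (2 * π * c * u) * cos (2 * π * y * u) =
      ((1 - u) * cos (2 * π * (y + c) * u) + (1 - u) * cos (2 * π * (y - c) * u)) / 2 := by
    rw [show 2 * π * (y + c) * u = 2 * π * y * u + 2 * π * c * u by ring,
      show 2 * π * (y - c) * u = 2 * π * y * u - 2 * π * c * u by ring, cos_add, cos_sub]
    ring
  simp only [cosTransform, hprod, intervalIntegral.integral_div]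
  rw [intervalIntegral.integral_add (Continuous.intervalIntegrable (by fun_prop) _ _)
    (Continuous.intervalIntegrable (by fun_prop) _ _), integral_one_sub_mul_cos_two_pi_mul,
    integral_one_sub_mul_cos_two_pi_mul]
  ring

lemma cosTransform_inv_pi_mul_sin (c y : ℝ) :
    cosTransform (fun u ↦ π⁻¹ * sin (2 * π * c * u)) y =
      (y + c) * sincSq (y + c) - (y - c) * sincSq (y - c) := by
  have hprod (u : ℝ) : π⁻¹ * sin (2 * π * c * u) * cos (2 * π * y * u) =
      (2 * π)⁻¹ * (sin (2 * π * (y + c) * u) - sin (2 * π * (y - c) * u)) := by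
    rw [show 2 * π * (y + c) * u = 2 * π * y * u + 2 * π * c * u by ring,
      show 2 * π * (y - c) * u = 2 * π * y * u - 2 * π * c * u by ring, sin_add, sin_sub]
    ring
  simp only [cosTransform, hprod, intervalIntegral.integral_const_mul]
  rw [intervalIntegral.integral_sub (Continuous.intervalIntegrable (by fun_prop) _ _)
    (Continuous.intervalIntegrable (by fun_prop) _ _), integral_sin_two_pi_mul,
    integral_sin_two_pi_mul]
  field_simp

/-- The inverse Fourier transform of `selbergMajorant L` restricted to `[0, 1]`: the terms
`(1 - u) * cos` produce the values of the interpolation series, the sine its two derivative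
terms. -/
def majorantProfile (L : ℕ) (u : ℝ) : ℝ :=
  ∑ n ∈ Finset.range (L + 1), (1 - u) * cos (2 * π * (n - L / 2) * u) +
    π⁻¹ * sin (2 * π * (L / 2) * u)

/-- The inverse Fourier transform of `selbergError L` restricted to `[0, 1]`. -/
def errorProfile (L : ℕ) (u : ℝ) : ℝ :=
  2 * ((1 - u) * cos (2 * π * (L / 2) * u))

lemma continuous_majorantProfile (L : ℕ) : Continuous (majorantProfile L) := by
  unfold majorantProfile
  fun_prop

lemma continuous_errorProfile (L : ℕ) : Continuous (errorProfile L) := by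
  unfold errorProfile
  fun_prop

lemma majorantProfile_zero (L : ℕ) : majorantProfile L 0 = L + 1 := by
  simp [majorantProfile]

lemma majorantProfile_one (L : ℕ) : majorantProfile L 1 = 0 := by
  simp [majorantProfile, show 2 * π * (L / 2) = L * π by ring]

lemma errorProfile_zero (L : ℕ) : errorProfile L 0 = 2 := by
  simp [errorProfile]

lemma errorProfile_one (L : ℕ) : errorProfile L 1 = 0 := by
  simp [errorProfile]

lemma cosTransform_majorantProfile (L : ℕ) (y : ℝ) :
    cosTransform (majorantProfile L) y = selbergMajorant L y := by
  have hsymm := sum_range_comp_sub_half (fun c ↦ sincSq (y + c)) L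
  have hneg (n : ℕ) : y + ((L : ℝ) / 2 - n) = y - (n - L / 2) := by ring
  simp only [hneg] at hsymm
  unfold majorantProfile
  rw [cosTransform_add (by fun_prop) (by fun_prop), cosTransform_sum _ (fun _ ↦ by fun_prop),
    cosTransform_inv_pi_mul_sin, selbergMajorant]
  simp only [cosTransform_one_sub_mul_cos, ← Finset.sum_div, Finset.sum_add_distrib, hsymm,
    add_self_div_two]

lemma cosTransform_errorProfile (L : ℕ) (y : ℝ) :
    cosTransform (errorProfile L) y = selbergError L y := by
  unfold errorProfile
  rw [cosTransform_const_mul, cosTransform_one_sub_mul_cos, selbergError]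
  ring

/-! ### Periodic kernels with prescribed Fourier coefficients -/

/-- The periodic kernel with Fourier coefficients `(2m+1)⁻¹ * cosTransform Φ (L k / (2m+1))`. The
scale `L / (2m+1)` sends the frequencies `|k| ≤ m` of the Dirichlet kernel into `(-L/2, L/2)` and
all other frequencies outside `[-L/2, L/2]`. -/
def profileKernel (Φ : ℝ → ℝ) (m L : ℕ) (t : ℝ) : ℝ :=
  (2 * m + 1 : ℝ)⁻¹ * periodization Φ (L / (2 * m + 1)) t

section DirichletKernel

variable {m L : ℕ}

lemma dirKer_zero (m : ℕ) : dirKer m 0 = 1 := by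
  have hcard : ((m + 1 + m : ℤ).toNat : ℝ) = 2 * m + 1 := by
    rw [show (m + 1 + m : ℤ) = (2 * m + 1 : ℕ) by push_cast; ring, Int.toNat_natCast]
    push_cast
    rfl
  have : (2 * m + 1 : ℝ) ≠ 0 := by positivity
  simp [dirKer, hcard, this]

lemma hasSum_dirKer (m : ℕ) (t : ℝ) :
    HasSum (fun k : ℤ ↦ (2 * m + 1 : ℝ)⁻¹ * (Set.Icc (-m : ℤ) m).indicator 1 k *
      cos (2 * π * k * t)) (dirKer m t) := by
  have hsum : dirKer m t = ∑ k ∈ Finset.Icc (-m : ℤ) m,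
      (2 * m + 1 : ℝ)⁻¹ * (Set.Icc (-m : ℤ) m).indicator 1 k * cos (2 * π * k * t) := by
    rw [dirKer, Finset.mul_sum]
    refine Finset.sum_congr rfl fun k hk ↦ ?_
    have hk' : k ∈ Set.Icc (-m : ℤ) m := Finset.mem_Icc.mp hk
    rw [Set.indicator_of_mem hk', Pi.one_apply, mul_one]
  rw [hsum]
  refine hasSum_sum_of_ne_finset_zero fun k hk ↦ ?_
  have hk' : k ∉ Set.Icc (-m : ℤ) m := fun h ↦ hk (Finset.mem_Icc.mpr h)
  rw [Set.indicator_of_notMem hk', mul_zero, zero_mul]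

lemma abs_div_mul_lt_half (hL : 0 < L) {k : ℤ} (hk : k ∈ Set.Icc (-m : ℤ) m) :
    |(L / (2 * m + 1) : ℝ) * k| < L / 2 := by
  have hkm : |(k : ℝ)| ≤ m := by exact_mod_cast abs_le.mpr hk
  have hL' : (0 : ℝ) < L := by exact_mod_cast hL
  rw [abs_mul, abs_of_pos (by positivity), div_mul_eq_mul_div, div_lt_div_iff₀ (by positivity)
    two_pos]
  nlinarith

lemma half_lt_abs_div_mul (hL : 0 < L) {k : ℤ} (hk : k ∉ Set.Icc (-m : ℤ) m) :
    L / 2 < |(L / (2 * m + 1) : ℝ) * k| := by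
  have hmk : (m : ℝ) + 1 ≤ |(k : ℝ)| := by
    exact_mod_cast Int.add_one_le_of_lt (not_le.mp fun h ↦ hk (abs_le.mp h))
  have hL' : (0 : ℝ) < L := by exact_mod_cast hL
  rw [abs_mul, abs_of_pos (by positivity), div_mul_eq_mul_div, div_lt_div_iff₀ two_pos
    (by positivity)]
  nlinarith

lemma indicator_le_selbergMajorant (hL : 0 < L) (k : ℤ) :
    (Set.Icc (-m : ℤ) m).indicator 1 k ≤ selbergMajorant L (L / (2 * m + 1) * k) := by
  by_cases hk : k ∈ Set.Icc (-m : ℤ) m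
  · rw [Set.indicator_of_mem hk]
    exact one_le_selbergMajorant (abs_div_mul_lt_half hL hk)
  · rw [Set.indicator_of_notMem hk]
    exact selbergMajorant_nonneg (half_lt_abs_div_mul hL hk)

lemma selbergMajorant_le_indicator_add (hL : 0 < L) (k : ℤ) :
    selbergMajorant L (L / (2 * m + 1) * k) ≤
      (Set.Icc (-m : ℤ) m).indicator 1 k + selbergError L (L / (2 * m + 1) * k) := by
  by_cases hk : k ∈ Set.Icc (-m : ℤ) m
  · rw [Set.indicator_of_mem hk]
    exact selbergMajorant_le_one_add (abs_div_mul_lt_half hL hk)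
  · rw [Set.indicator_of_notMem hk, zero_add]
    exact selbergMajorant_le_selbergError (half_lt_abs_div_mul hL hk)

lemma summable_selbergError {δ : ℝ} (hδ : 0 < δ) (L : ℕ) :
    Summable fun k : ℤ ↦ selbergError L (δ * k) := by
  simpa only [selbergError, sub_eq_add_neg] using
    (summable_sincSq_mul_intCast_add hδ _).add (summable_sincSq_mul_intCast_add hδ _)

lemma summable_selbergMajorant (hL : 0 < L) (m : ℕ) :
    Summable fun k : ℤ ↦ selbergMajorant L (L / (2 * m + 1) * k) := by
  have hδ : (0 : ℝ) < L / (2 * m + 1) := by positivity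
  have hind : Summable ((Set.Icc (-m : ℤ) m).indicator (1 : ℤ → ℝ)) :=
    summable_of_hasFiniteSupport ((Set.finite_Icc _ _).subset Set.support_indicator_subset)
  refine (hind.add (summable_selbergError hδ L)).of_nonneg_of_le (fun k ↦ ?_)
    (selbergMajorant_le_indicator_add hL)
  exact (Set.indicator_nonneg (fun _ _ ↦ zero_le_one) k).trans (indicator_le_selbergMajorant hL k)

lemma hasSum_profileKernel {Φ : ℝ → ℝ} (hΦ : Continuous Φ) (hΦ₁ : Φ 1 = 0) (hL : 0 < L)
    (hsum : Summable fun k : ℤ ↦ cosTransform Φ (L / (2 * m + 1) * k)) (t : ℝ) :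
    HasSum (fun k : ℤ ↦ (2 * m + 1 : ℝ)⁻¹ * cosTransform Φ (L / (2 * m + 1) * k) *
      cos (2 * π * k * t)) (profileKernel Φ m L t) := by
  simpa only [profileKernel, mul_assoc ((2 * m + 1 : ℝ)⁻¹)] using
    (hasSum_cosTransform_mul_cos hΦ hΦ₁ (by positivity) hsum t).mul_left (2 * m + 1 : ℝ)⁻¹

lemma profileKernel_zero {Φ : ℝ → ℝ} (hΦ₁ : Φ 1 = 0) (hL : 0 < L) (hLm : L ≤ 2 * m + 1) :
    profileKernel Φ m L 0 = Φ 0 / L := by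
  have hLm' : (L : ℝ) ≤ 2 * m + 1 := by exact_mod_cast hLm
  rw [profileKernel, periodization_zero hΦ₁ (by positivity)
    (div_le_one_of_le₀ hLm' (by positivity))]
  field_simp

lemma profileKernel_eq_zero {Φ : ℝ → ℝ} (hΦ₁ : Φ 1 = 0) (hL : 0 < L) {t : ℝ}
    (ht : ∀ n : ℤ, (L : ℝ) / (2 * m + 1) ≤ |t + n|) : profileKernel Φ m L t = 0 := by
  rw [profileKernel, periodization_eq_zero hΦ₁ (by positivity) ht, mul_zero]

end DirichletKernel

/-! ### Positive semidefinite kernels and their products -/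

/-- The positive semidefinite real kernels on a finite set, closed under pointwise multiplication
by the Schur product theorem. The Loewner order `A ≤ B` is expressed as
`B - A ∈ posSemidefKernels ι`. -/
def posSemidefKernels (ι : Type*) [Finite ι] : Subsemiring (ι → ι → ℝ) where
  carrier := {K | (Matrix.of K).PosSemidef}
  mul_mem' hK hK' := hK.hadamard hK'
  one_mem' := by
    have hone : Matrix.of (1 : ι → ι → ℝ) = Matrix.vecMulVec 1 (star 1) := by
      ext
      simp [Matrix.vecMulVec]
    change (Matrix.of 1).PosSemidef
    exact hone ▸ Matrix.posSemidef_vecMulVec_self_star 1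
  add_mem' hK hK' := hK.add hK'
  zero_mem' := .zero

section Kernels

variable {ι : Type*}

lemma sum_sum_mul_le_of_sub_mem [Fintype ι] {A B : ι → ι → ℝ}
    (hAB : B - A ∈ posSemidefKernels ι) (v : ι → ℝ) :
    ∑ j, ∑ k, v j * A j k * v k ≤ ∑ j, ∑ k, v j * B j k * v k := by
  have h := Matrix.PosSemidef.dotProduct_mulVec_nonneg hAB v
  simpa [dotProduct, Matrix.mulVec, Finset.mul_sum, mul_sub, sub_mul, mul_assoc,
    Finset.sum_sub_distrib] using h

lemma sum_sum_mul_of_offDiag_eq_zero [Fintype ι] {K : ι → ι → ℝ} {c : ℝ}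
    (hdiag : ∀ i, K i i = c) (hoff : ∀ i j, i ≠ j → K i j = 0) (v : ι → ℝ) :
    ∑ j, ∑ k, v j * K j k * v k = c * ∑ i, v i ^ 2 := by
  rw [Finset.mul_sum]
  refine Finset.sum_congr rfl fun j _ ↦ ?_
  rw [Finset.sum_eq_single j (fun k _ hk ↦ by rw [hoff j k hk.symm, mul_zero, zero_mul])
    (fun h ↦ absurd (Finset.mem_univ j) h), hdiag]
  ring

lemma sq_sum_mul_cos_add_sq_sum_mul_sin [Fintype ι] (v a : ι → ℝ) :
    (∑ i, v i * cos (a i)) ^ 2 + (∑ i, v i * sin (a i)) ^ 2 =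
      ∑ i, ∑ j, v i * v j * cos (a i - a j) := by
  simp only [sq, Finset.sum_mul_sum, ← Finset.sum_add_distrib, cos_sub]
  refine Finset.sum_congr rfl fun i _ ↦ Finset.sum_congr rfl fun j _ ↦ ?_
  ring

lemma mem_posSemidefKernels_of_hasSum_cos [Finite ι] {w : ℤ → ℝ} (hw : ∀ k, 0 ≤ w k)
    {G : ℝ → ℝ} (hG : ∀ t, HasSum (fun k : ℤ ↦ w k * cos (2 * π * k * t)) (G t)) (x : ι → ℝ) :
    (fun i j ↦ G (x i - x j)) ∈ posSemidefKernels ι := by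
  cases nonempty_fintype ι
  have hsymm (i j : ι) : G (x j - x i) = G (x i - x j) := by
    refine (hG _).unique ?_
    convert hG (x i - x j) using 3
    rw [← cos_neg]
    congr 1
    ring
  refine Matrix.PosSemidef.of_dotProduct_mulVec_nonneg (Matrix.IsHermitian.ext hsymm) fun v ↦ ?_
  have hsum := hasSum_sum fun i (_ : i ∈ Finset.univ) ↦ hasSum_sum fun j (_ : j ∈ Finset.univ) ↦
    (hG (x i - x j)).mul_left (v i * v j)
  have hterm (k : ℤ) : ∑ i, ∑ j, v i * v j * (w k * cos (2 * π * k * (x i - x j))) =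
      w k * ((∑ i, v i * cos (2 * π * k * x i)) ^ 2 + (∑ i, v i * sin (2 * π * k * x i)) ^ 2) := by
    simp only [sq_sum_mul_cos_add_sq_sum_mul_sin, Finset.mul_sum, mul_sub, mul_left_comm (w k)]
  have hform : star v ⬝ᵥ (Matrix.of fun i j ↦ G (x i - x j)).mulVec v =
      ∑ i, ∑ j, v i * v j * G (x i - x j) := by
    simp only [dotProduct, Matrix.mulVec, Finset.mul_sum, Matrix.of_apply, star_trivial,
      mul_assoc, mul_comm (G _)]
  rw [hform]
  refine hsum.nonneg fun k ↦ ?_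
  rw [hterm]
  exact mul_nonneg (hw k) (by positivity)

end Kernels

section Products

variable {κ A : Type*} [CommRing A] {S : Subsemiring A} {u p r : κ → A}

lemma prod_sub_prod_mem (s : Finset κ) (hu : ∀ i, u i ∈ S) (hpu : ∀ i, p i - u i ∈ S) :
    ∏ i ∈ s, p i - ∏ i ∈ s, u i ∈ S := by
  induction s using Finset.cons_induction with
  | empty => simp
  | cons a s ha ih =>
    have hp : ∏ i ∈ s, p i ∈ S := by
      simpa using S.add_mem ih (S.prod_mem (t := s) fun i _ ↦ hu i)
    have hsplit : ∏ i ∈ s.cons a ha, p i - ∏ i ∈ s.cons a ha, u i =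
        (p a - u a) * ∏ i ∈ s, p i + u a * (∏ i ∈ s, p i - ∏ i ∈ s, u i) := by
      rw [Finset.prod_cons, Finset.prod_cons]
      ring
    rw [hsplit]
    exact S.add_mem (S.mul_mem (hpu a) hp) (S.mul_mem (hu a) ih)

lemma sum_mul_prod_erase_sub_mem [DecidableEq κ] (s : Finset κ) (hu : ∀ i, u i ∈ S)
    (hpu : ∀ i, p i - u i ∈ S) (hr : ∀ i, r i - (p i - u i) ∈ S) :
    ∑ i ∈ s, r i * ∏ j ∈ s.erase i, p j - (∏ i ∈ s, p i - ∏ i ∈ s, u i) ∈ S := by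
  have hp (i : κ) : p i ∈ S := by simpa using S.add_mem (hpu i) (hu i)
  have hrS (i : κ) : r i ∈ S := by simpa using S.add_mem (hr i) (hpu i)
  induction s using Finset.induction_on with
  | empty => simp
  | insert a s ha ih =>
    have herase : ∑ i ∈ s, r i * ∏ j ∈ (insert a s).erase i, p j =
        p a * ∑ i ∈ s, r i * ∏ j ∈ s.erase i, p j := by
      rw [Finset.mul_sum]
      refine Finset.sum_congr rfl fun i hi ↦ ?_
      have hia : a ≠ i := fun h ↦ ha (h ▸ hi)
      rw [Finset.erase_insert_of_ne hia, Finset.prod_insert fun h ↦ ha (Finset.mem_of_mem_erase h),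
        mul_left_comm]
    have hsplit : ∑ i ∈ insert a s, r i * ∏ j ∈ (insert a s).erase i, p j -
        (∏ i ∈ insert a s, p i - ∏ i ∈ insert a s, u i) =
        p a * (∑ i ∈ s, r i * ∏ j ∈ s.erase i, p j - (∏ i ∈ s, p i - ∏ i ∈ s, u i)) +
          (r a * (∏ i ∈ s, p i - ∏ i ∈ s, u i) + (r a - (p a - u a)) * ∏ i ∈ s, u i) := by
      rw [Finset.sum_insert ha, herase, Finset.erase_insert ha, Finset.prod_insert ha,
        Finset.prod_insert ha]
      ring
    rw [hsplit]
    exact S.add_mem (S.mul_mem (hp a) ih) (S.add_mem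
      (S.mul_mem (hrS a) (prod_sub_prod_mem s hu hpu))
      (S.mul_mem (hr a) (S.prod_mem fun i _ ↦ hu i)))

end Products

section Tensorization

variable {ι κ : Type*} [Fintype ι] [Fintype κ] {u p r : κ → ι → ι → ℝ} {P R : ℝ}

lemma sum_sum_mul_prod_le (hu : ∀ l, u l ∈ posSemidefKernels ι)
    (hpu : ∀ l, p l - u l ∈ posSemidefKernels ι) (hp : ∀ l i, p l i i = P)
    (hsep : ∀ i j, i ≠ j → ∃ l, p l i j = 0) (v : ι → ℝ) :
    ∑ j, ∑ k, v j * (∏ l, u l j k) * v k ≤ P ^ Fintype.card κ * ∑ i, v i ^ 2 := by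
  have hform := sum_sum_mul_of_offDiag_eq_zero (K := ∏ l, p l) (c := P ^ Fintype.card κ)
    (fun i ↦ by simp [Finset.prod_apply, hp])
    (fun i j hij ↦ by
      obtain ⟨l, hl⟩ := hsep i j hij
      simpa [Finset.prod_apply] using Finset.prod_eq_zero (Finset.mem_univ l) hl) v
  rw [← hform]
  simpa [Finset.prod_apply] using
    sum_sum_mul_le_of_sub_mem (prod_sub_prod_mem Finset.univ hu hpu) v

lemma le_sum_sum_mul_prod (hu : ∀ l, u l ∈ posSemidefKernels ι)
    (hpu : ∀ l, p l - u l ∈ posSemidefKernels ι)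
    (hr : ∀ l, r l - (p l - u l) ∈ posSemidefKernels ι)
    (hp : ∀ l i, p l i i = P) (hrR : ∀ l i, r l i i = R)
    (hsep : ∀ i j, i ≠ j → ∃ l, p l i j = 0 ∧ r l i j = 0) (v : ι → ℝ) :
    (P ^ Fintype.card κ - Fintype.card κ * (R * P ^ (Fintype.card κ - 1))) * ∑ i, v i ^ 2 ≤
      ∑ j, ∑ k, v j * (∏ l, u l j k) * v k := by
  classical
  have hoff (i j : ι) (hij : i ≠ j) :
      (∏ l, p l - ∑ l, r l * ∏ l' ∈ Finset.univ.erase l, p l') i j = 0 := by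
    obtain ⟨l, hpl, hrl⟩ := hsep i j hij
    have hprod : ∏ l, p l i j = 0 := Finset.prod_eq_zero (Finset.mem_univ l) hpl
    have hsum : ∑ l', r l' i j * ∏ l'' ∈ Finset.univ.erase l', p l'' i j = 0 := by
      refine Finset.sum_eq_zero fun l' _ ↦ ?_
      rcases eq_or_ne l l' with rfl | hne
      · rw [hrl, zero_mul]
      · rw [Finset.prod_eq_zero (Finset.mem_erase.mpr ⟨hne, Finset.mem_univ l⟩) hpl, mul_zero]
    simp [Finset.prod_apply, Finset.sum_apply, hprod, hsum]
  have hform := sum_sum_mul_of_offDiag_eq_zero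
    (c := P ^ Fintype.card κ - Fintype.card κ * (R * P ^ (Fintype.card κ - 1)))
    (fun i ↦ by
      simp [Finset.prod_apply, Finset.sum_apply, hp, hrR, Finset.card_univ]) hoff v
  rw [← hform]
  have hmem := sum_mul_prod_erase_sub_mem Finset.univ hu hpu hr
  rw [sub_sub_eq_add_sub, add_comm, ← sub_sub_eq_add_sub] at hmem
  simpa [Finset.prod_apply] using sum_sum_mul_le_of_sub_mem hmem v

end Tensorization

/-! ### Kernel matrices of separated points -/

section SeparatedPoints

variable {m L : ℕ} {ι : Type*}

lemma hasSum_profileKernel_majorantProfile (hL : 0 < L) (m : ℕ) (t : ℝ) :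
    HasSum (fun k : ℤ ↦ (2 * m + 1 : ℝ)⁻¹ * selbergMajorant L (L / (2 * m + 1) * k) *
      cos (2 * π * k * t)) (profileKernel (majorantProfile L) m L t) := by
  simp only [← cosTransform_majorantProfile]
  exact hasSum_profileKernel (continuous_majorantProfile L) (majorantProfile_one L) hL
    (by simpa only [cosTransform_majorantProfile] using summable_selbergMajorant hL m) t

lemma hasSum_profileKernel_errorProfile (hL : 0 < L) (m : ℕ) (t : ℝ) :
    HasSum (fun k : ℤ ↦ (2 * m + 1 : ℝ)⁻¹ * selbergError L (L / (2 * m + 1) * k) *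
      cos (2 * π * k * t)) (profileKernel (errorProfile L) m L t) := by
  simp only [← cosTransform_errorProfile]
  exact hasSum_profileKernel (continuous_errorProfile L) (errorProfile_one L) hL
    (by simpa only [cosTransform_errorProfile] using summable_selbergError (by positivity) L) t

lemma dirKer_mem_posSemidefKernels [Finite ι] (m : ℕ) (x : ι → ℝ) :
    (fun i j ↦ dirKer m (x i - x j)) ∈ posSemidefKernels ι :=
  mem_posSemidefKernels_of_hasSum_cos (fun k ↦ mul_nonneg (by positivity)
    (Set.indicator_nonneg (fun _ _ ↦ zero_le_one) k)) (hasSum_dirKer m) x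

lemma majorant_sub_dirKer_mem_posSemidefKernels [Finite ι] (hL : 0 < L) (x : ι → ℝ) :
    (fun i j ↦ profileKernel (majorantProfile L) m L (x i - x j)) -
      (fun i j ↦ dirKer m (x i - x j)) ∈ posSemidefKernels ι := by
  have hsum (t : ℝ) := (hasSum_profileKernel_majorantProfile hL m t).sub (hasSum_dirKer m t)
  simp only [← sub_mul, ← mul_sub] at hsum
  refine mem_posSemidefKernels_of_hasSum_cos (fun k ↦ ?_) hsum x
  exact mul_nonneg (by positivity) (sub_nonneg.mpr (indicator_le_selbergMajorant hL k))

lemma error_sub_majorant_sub_dirKer_mem_posSemidefKernels [Finite ι] (hL : 0 < L) (x : ι → ℝ) :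
    (fun i j ↦ profileKernel (errorProfile L) m L (x i - x j)) -
      ((fun i j ↦ profileKernel (majorantProfile L) m L (x i - x j)) -
        fun i j ↦ dirKer m (x i - x j)) ∈ posSemidefKernels ι := by
  have hsum (t : ℝ) := (hasSum_profileKernel_errorProfile hL m t).sub
    ((hasSum_profileKernel_majorantProfile hL m t).sub (hasSum_dirKer m t))
  simp only [← sub_mul, ← mul_sub] at hsum
  refine mem_posSemidefKernels_of_hasSum_cos (fun k ↦ ?_) hsum x
  exact mul_nonneg (by positivity)
    (sub_nonneg.mpr (sub_le_iff_le_add'.mpr (selbergMajorant_le_indicator_add hL k)))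

lemma sqDirKer_form_bounds [Fintype ι] {d : ℕ} (hL : 0 < L) (hLm : L ≤ 2 * m + 1)
    (θ : ι → EuclideanSpace ℝ (Fin d))
    (hsep : ∀ i j, i ≠ j → ∃ l, ∀ n : ℤ, (L : ℝ) / (2 * m + 1) ≤ |(θ i - θ j) l + n|)
    (v : ι → ℝ) :
    ((1 + (L : ℝ)⁻¹) ^ d - d * (2 * (L : ℝ)⁻¹ * (1 + (L : ℝ)⁻¹) ^ (d - 1))) * ∑ i, v i ^ 2
        ≤ ∑ j, ∑ k, v j * sqDirKer d m (θ j - θ k) * v k ∧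
      ∑ j, ∑ k, v j * sqDirKer d m (θ j - θ k) * v k ≤ (1 + (L : ℝ)⁻¹) ^ d * ∑ i, v i ^ 2 := by
  let u (l : Fin d) (i j : ι) : ℝ := dirKer m (θ i l - θ j l)
  let p (l : Fin d) (i j : ι) : ℝ := profileKernel (majorantProfile L) m L (θ i l - θ j l)
  let r (l : Fin d) (i j : ι) : ℝ := profileKernel (errorProfile L) m L (θ i l - θ j l)
  have hu (l : Fin d) : u l ∈ posSemidefKernels ι := dirKer_mem_posSemidefKernels m _
  have hpu (l : Fin d) : p l - u l ∈ posSemidefKernels ι :=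
    majorant_sub_dirKer_mem_posSemidefKernels hL _
  have hr (l : Fin d) : r l - (p l - u l) ∈ posSemidefKernels ι :=
    error_sub_majorant_sub_dirKer_mem_posSemidefKernels hL _
  have hpdiag (l : Fin d) (i : ι) : p l i i = 1 + (L : ℝ)⁻¹ := by
    simp only [p, sub_self, profileKernel_zero (majorantProfile_one L) hL hLm,
      majorantProfile_zero]
    field_simp
  have hrdiag (l : Fin d) (i : ι) : r l i i = 2 * (L : ℝ)⁻¹ := by
    simp only [r, sub_self, profileKernel_zero (errorProfile_one L) hL hLm, errorProfile_zero,
      div_eq_mul_inv]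
  have hoff (i j : ι) (hij : i ≠ j) : ∃ l, p l i j = 0 ∧ r l i j = 0 := by
    obtain ⟨l, hl⟩ := hsep i j hij
    exact ⟨l, profileKernel_eq_zero (majorantProfile_one L) hL hl,
      profileKernel_eq_zero (errorProfile_one L) hL hl⟩
  constructor
  · simpa only [Fintype.card_fin, sqDirKer, PiLp.sub_apply] using
      le_sum_sum_mul_prod hu hpu hr hpdiag hrdiag hoff v
  · simpa only [Fintype.card_fin, sqDirKer, PiLp.sub_apply] using
      sum_sum_mul_prod_le hu hpu hpdiag (fun i j hij ↦ (hoff i j hij).imp fun _ h ↦ h.1) v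

lemma sum_sum_mul_sqDirKer_of_subsingleton [Fintype ι] [Subsingleton ι] (d m : ℕ)
    (θ : ι → EuclideanSpace ℝ (Fin d)) (v : ι → ℝ) :
    ∑ j, ∑ k, v j * sqDirKer d m (θ j - θ k) * v k = ∑ i, v i ^ 2 := by
  have hdiag (i : ι) : sqDirKer d m (θ i - θ i) = 1 := by simp [sqDirKer, dirKer_zero]
  simpa using sum_sum_mul_of_offDiag_eq_zero (K := fun i j ↦ sqDirKer d m (θ i - θ j)) hdiag
    (fun i j hij ↦ absurd (Subsingleton.elim i j) hij) v

end SeparatedPoints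

/-! ### Choice of the scale -/

lemma exists_coord_le_of_le_torusDist {d : ℕ} [NeZero d] {x y : EuclideanSpace ℝ (Fin d)}
    {δ : ℝ} (hδ : 0 ≤ δ) (h : δ * √d ≤ torusDist x y) : ∃ l, ∀ n : ℤ, δ ≤ |(x - y) l + n| := by
  by_contra! hclose
  choose n hn using hclose
  set w := x - y + ∑ i, (n i : ℝ) • EuclideanSpace.single i (1 : ℝ) with hw
  have hcoord (l : Fin d) : w l = (x - y) l + n l := by
    simp [hw, Finset.sum_apply, Pi.single_apply]
  have hdist : δ * √d ≤ ‖w‖ :=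
    h.trans (ciInf_le ⟨0, Set.forall_mem_range.mpr fun _ ↦ norm_nonneg _⟩ n)
  have hnorm : ‖w‖ ^ 2 < (δ * √d) ^ 2 := by
    calc ‖w‖ ^ 2 = ∑ l, |(x - y) l + n l| ^ 2 := by
          simp only [EuclideanSpace.norm_sq_eq, hcoord, norm_eq_abs]
      _ < ∑ _l : Fin d, δ ^ 2 := Finset.sum_lt_sum_of_nonempty Finset.univ_nonempty fun l _ ↦
          pow_lt_pow_left₀ (hn l) (abs_nonneg _) two_ne_zero
      _ = (δ * √d) ^ 2 := by simp [mul_pow, mul_comm]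
  exact (pow_le_pow_left₀ (by positivity) hdist 2).not_gt hnorm

lemma le_half_of_forall_le_abs_add_intCast {t δ : ℝ} (h : ∀ n : ℤ, δ ≤ |t + n|) : δ ≤ 1 / 2 := by
  have hround := h (-round t)
  rw [Int.cast_neg, ← sub_eq_add_neg] at hround
  exact hround.trans (abs_sub_round t)

lemma one_add_pow_le_one_add {d : ℕ} {a x : ℝ} (ha : 0 ≤ a) (hx : x ≤ 1)
    (h : 2 * (d * a) ≤ x * (1 + a)) : (1 + a) ^ d ≤ 1 + x := by
  have ha' : 0 < 1 + a := by positivity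
  set z := d * a / (1 + a) with hz
  have hz₀ : 0 ≤ z := by positivity
  have hzx : 2 * z ≤ x := by rwa [hz, ← mul_div_assoc, div_le_iff₀ ha']
  have hbernoulli : 1 - z ≤ ((1 + a) ^ d)⁻¹ := by
    have ha₁ : a / (1 + a) ≤ 1 := div_le_one_of_le₀ (by linarith) ha'.le
    calc 1 - z = 1 + d * -(a / (1 + a)) := by ring
      _ ≤ (1 + -(a / (1 + a))) ^ d := one_add_mul_le_pow (by linarith) d
      _ = ((1 + a) ^ d)⁻¹ := by
        rw [← inv_pow]
        congr 1
        field_simp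
        ring
  have hz₁ : (0 : ℝ) < 1 - z := by linarith
  calc (1 + a) ^ d ≤ (1 - z)⁻¹ := le_inv_of_le_inv₀ hz₁ hbernoulli
    _ ≤ 1 + 2 * z := by
        rw [inv_le_iff_one_le_mul₀ hz₁]
        nlinarith
    _ ≤ 1 + x := by linarith

lemma one_sub_le_one_add_pow_sub {d : ℕ} {a x : ℝ} (ha : 0 ≤ a) (hx : x ≤ 1)
    (h : 2 * (d * a) ≤ x * (1 + a)) :
    1 - x ≤ (1 + a) ^ d - d * (2 * a * (1 + a) ^ (d - 1)) := by
  have hx₀ : 0 ≤ x := nonneg_of_mul_nonneg_left ((by positivity : 0 ≤ 2 * (d * a)).trans h)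
    (by positivity)
  rcases d with _ | d
  · simpa using hx₀
  · calc 1 - x ≤ (1 - x) * (1 + a) ^ (d + 1) :=
          le_mul_of_one_le_right (sub_nonneg.mpr hx) (one_le_pow₀ (by linarith))
      _ = (1 + a) ^ d * ((1 - x) * (1 + a)) := by ring
      _ ≤ (1 + a) ^ d * (1 + a - 2 * ((d + 1 : ℕ) * a)) := by gcongr; linarith
      _ = (1 + a) ^ (d + 1) - (d + 1 : ℕ) * (2 * a * (1 + a) ^ (d + 1 - 1)) := by
        rw [Nat.add_sub_cancel]
        ring

lemma exists_nat_le_and_two_mul_inv_le {c t x : ℝ} (hc : 1 ≤ c) (hx₀ : 0 < x) (hx₁ : x ≤ 1)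
    (h : 2 * c ≤ t * x) : ∃ L : ℕ, 0 < L ∧ L ≤ t ∧ 2 * (c * (L : ℝ)⁻¹) ≤ x * (1 + (L : ℝ)⁻¹) := by
  have ht₀ : 0 ≤ t := nonneg_of_mul_nonneg_left (by linarith) hx₀
  have ht₁ : 1 ≤ t := by linarith [mul_le_of_le_one_right ht₀ hx₁]
  have hL : 0 < ⌊t⌋₊ := Nat.floor_pos.mpr ht₁
  refine ⟨⌊t⌋₊, hL, Nat.floor_le ht₀, ?_⟩
  have hLx : 2 * c ≤ (⌊t⌋₊ + 1) * x :=
    h.trans (mul_le_mul_of_nonneg_right (Nat.lt_floor_add_one t).le hx₀.le)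
  have hL' : (⌊t⌋₊ : ℝ) ≠ 0 := by positivity
  calc 2 * (c * (⌊t⌋₊ : ℝ)⁻¹) = 2 * c * (⌊t⌋₊ : ℝ)⁻¹ := by ring
    _ ≤ (⌊t⌋₊ + 1) * x * (⌊t⌋₊ : ℝ)⁻¹ := by gcongr
    _ = x * (1 + (⌊t⌋₊ : ℝ)⁻¹) := by field_simp

lemma rpow_three_halves {a : ℝ} (ha : 0 ≤ a) : a ^ ((3 : ℝ) / 2) = a * √a := by
  rw [show (3 : ℝ) / 2 = 1 + 1 / 2 by norm_num, rpow_one_add' ha (by norm_num), sqrt_eq_rpow]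

lemma exists_nat_forall_separated {d m : ℕ} [NeZero d] (hm : 1 ≤ m) {ι : Type*} [Nontrivial ι]
    {β : ℝ} (hβ : (d : ℝ) ^ ((3 : ℝ) / 2) ≤ β) {θ : ι → EuclideanSpace ℝ (Fin d)}
    (hsep : ∀ j k, j ≠ k → β / m ≤ torusDist (θ j) (θ k)) :
    ∃ L : ℕ, 0 < L ∧ L ≤ 2 * m + 1 ∧
      (∀ j k, j ≠ k → ∃ l, ∀ n : ℤ, (L : ℝ) / (2 * m + 1) ≤ |(θ j - θ k) l + n|) ∧
      2 * (d * (L : ℝ)⁻¹) ≤ (d : ℝ) ^ ((3 : ℝ) / 2) / β * (1 + (L : ℝ)⁻¹) := by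
  have hd : (1 : ℝ) ≤ d := by exact_mod_cast NeZero.one_le
  have hpow : 0 < (d : ℝ) ^ ((3 : ℝ) / 2) := by positivity
  have hβ₀ : 0 < β := hpow.trans_le hβ
  set δ := β / (m * √d) with hδ
  have hcoord (j k : ι) (hjk : j ≠ k) : ∃ l, ∀ n : ℤ, δ ≤ |(θ j - θ k) l + n| := by
    refine exists_coord_le_of_le_torusDist (by positivity) ?_
    have hδd : δ * √d = β / m := by
      rw [hδ]
      field_simp
    exact hδd ▸ hsep j k hjk
  have hδ_half : δ ≤ 1 / 2 := by
    obtain ⟨j, k, hjk⟩ := exists_pair_ne ι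
    obtain ⟨l, hl⟩ := hcoord j k hjk
    exact le_half_of_forall_le_abs_add_intCast hl
  have hscale : 2 * (d : ℝ) ≤ (2 * m + 1) * δ * ((d : ℝ) ^ ((3 : ℝ) / 2) / β) := by
    have hprod : (2 * m + 1) * δ * ((d : ℝ) ^ ((3 : ℝ) / 2) / β) = 2 * d + d / m := by
      rw [hδ, rpow_three_halves (by positivity)]
      field_simp
    rw [hprod]
    exact le_add_of_nonneg_right (by positivity)
  obtain ⟨L, hL, hLδ, hbound⟩ := exists_nat_le_and_two_mul_inv_le hd (by positivity)
    (div_le_one_of_le₀ hβ hβ₀.le) hscale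
  refine ⟨L, hL, ?_, fun j k hjk ↦ ?_, hbound⟩
  · have hLm : (L : ℝ) ≤ 2 * m + 1 := by nlinarith
    exact_mod_cast hLm
  · obtain ⟨l, hl⟩ := hcoord j k hjk
    exact ⟨l, fun n ↦ (div_le_of_le_mul₀ (by positivity) (by positivity)
      (by rwa [mul_comm])).trans (hl n)⟩

theorem stmt8_general {d m : ℕ} [NeZero d] (hm : 1 ≤ m) {ι : Type*} [Fintype ι]
    {β : ℝ} (hβ : (d : ℝ) ^ ((3 : ℝ) / 2) ≤ β) {θ : ι → EuclideanSpace ℝ (Fin d)}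
    (hsep : ∀ j k, j ≠ k → β / m ≤ torusDist (θ j) (θ k)) (v : ι → ℝ) :
    (1 - (d : ℝ) ^ ((3 : ℝ) / 2) / β) * ∑ i, v i ^ 2
        ≤ ∑ j, ∑ k, v j * sqDirKer d m (θ j - θ k) * v k ∧
      ∑ j, ∑ k, v j * sqDirKer d m (θ j - θ k) * v k
        ≤ (1 + (d : ℝ) ^ ((3 : ℝ) / 2) / β) * ∑ i, v i ^ 2 := by
  have hβ₀ : 0 ≤ β := (by positivity : 0 ≤ (d : ℝ) ^ ((3 : ℝ) / 2)).trans hβ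
  have hv : 0 ≤ ∑ i, v i ^ 2 := by positivity
  rcases subsingleton_or_nontrivial ι with hι | hι
  · have hx : 0 ≤ (d : ℝ) ^ ((3 : ℝ) / 2) / β * ∑ i, v i ^ 2 := by positivity
    rw [sum_sum_mul_sqDirKer_of_subsingleton]
    constructor <;> linarith
  · obtain ⟨L, hL, hLm, hLsep, hbound⟩ := exists_nat_forall_separated hm hβ hsep
    obtain ⟨hlower, hupper⟩ := sqDirKer_form_bounds hL hLm θ hLsep v
    have hx₁ := div_le_one_of_le₀ hβ hβ₀
    have hL₀ : (0 : ℝ) ≤ (L : ℝ)⁻¹ := by positivity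
    exact ⟨(mul_le_mul_of_nonneg_right (one_sub_le_one_add_pow_sub hL₀ hx₁ hbound) hv).trans hlower,
      hupper.trans (mul_le_mul_of_nonneg_right (one_add_pow_le_one_add hL₀ hx₁ hbound) hv)⟩

lemma le_pi_mul_div_log_two {a : ℝ} (ha : 0 ≤ a) : a ≤ π * a / log 2 := by
  have hlog : log 2 ≤ π := by linarith [log_two_lt_d9, pi_gt_three]
  rw [le_div_iff₀ (log_pos one_lt_two), mul_comm]
  exact mul_le_mul_of_nonneg_right hlog ha

/-- **Conditioning of the Dirichlet kernel matrix on the torus.**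
If `d ≥ 2`, `β ≥ π d^{3/2}/log 2` and the points `θ_1,…,θ_s ∈ 𝕋^d` satisfy
`Δ(ϑ) ≥ β/m`, then the kernel matrix `K_ϑ = [D_m(θ_j - θ_k)]` has all its
eigenvalues in `[1 - d^{3/2}/β, 1 + d^{3/2}/β]` (stated via the quadratic form,
equivalently for the symmetric matrix `K_ϑ`). -/
theorem stmt8 (d : ℕ) (hd : 2 ≤ d) (m : ℕ) (hm : 1 ≤ m) (s : ℕ) (hs : 1 ≤ s)
    (β : ℝ) (hβ : Real.pi * (d : ℝ) ^ ((3 : ℝ) / 2) / Real.log 2 ≤ β)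
    (θ : Fin s → EuclideanSpace ℝ (Fin d))
    (hsep : ∀ j k, j ≠ k → β / m ≤ torusDist (θ j) (θ k)) :
    ∀ v : Fin s → ℝ,
      (1 - (d : ℝ) ^ ((3 : ℝ) / 2) / β) * ∑ i, v i ^ 2
          ≤ ∑ j, ∑ k, v j * sqDirKer d m (θ j - θ k) * v k ∧
      ∑ j, ∑ k, v j * sqDirKer d m (θ j - θ k) * v k
          ≤ (1 + (d : ℝ) ^ ((3 : ℝ) / 2) / β) * ∑ i, v i ^ 2 := by
  have : NeZero d := ⟨by omega⟩
  exact stmt8_general hm ((le_pi_mul_div_log_two (by positivity)).trans hβ) hsep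

end
end

section
/- Let d ≥ 2, let m ≥ 1 be an integer, let β ≥ 4π√d, and let θ_1,…,θ_s ∈ 𝕋^d be distinct points with Δ := Δ(ϑ) ≥ β/m. Then for every ω ∈ 𝕋^d: Σ over those ℓ with |ω − θ_ℓ| ≥ Δ/2 of |D_m(ω − θ_ℓ)|² is at most 16π²d²/β², and Σ over those ℓ with |ω − θ_ℓ| ≥ Δ/2 of |∇D_m(ω − θ_ℓ)|² is at most 64π⁴d³m²/β². -/
noncomputable section

open Real
open scoped Classical

/-!
Scale by `m` the representatives of the points `ω - θ_ℓ` in `[-1/2, 1/2]^d`. They become vectors `x`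
with `|x|² ≥ X / 4` at mutual squared distance at least `X = β²`, and since `|sin πt| ≥ 2|t|`, the
`i`-th factor of the squared kernel (or of its gradient, normalized by `2πm`) is at most
`min(1, 1 / (4 x_i²))`.

For each point let `J` be the set of its largest coordinates, as few as carry all but `X / 8` of
`|x|²`. The remaining weight exceeds `X / 8` as soon as one `x_i²` with `i ∈ J` is added to it, and
each of its terms is at most this `x_i²`. Hence the factors outside `J` multiply to at most a
constant times `∏_{i ∈ J} exp(-A / x_i²)` with `A ≈ X / |J|`, and this exponential turns each
`1 / x_i²` into `1 / (x_i² + A)`. Points with the same `J` stay separated by `X / 2` in the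
coordinates of `J`, so a cubic cell of side `√(X / (2|J|))` holds at most one of them, and their
total contribution is at most a product of `|J|` one-dimensional sums, of order `(c |J| / X)^|J|`.
As `C(d, k) k^k ≤ (e d)^k`, summing over `J` leaves a geometric series of size `O(d / X)`.
-/

section

open Finset

section DominantCoordinates

variable {ι : Type*} [Fintype ι] [DecidableEq ι]

/-- `J` consists of heaviest coordinates, carries all but `B` of the weight `w`, and none of its
coordinates can be dropped. It plays the role of the set of coordinates in which a point far from
the origin is genuinely large. -/
structure IsDominantSet (w : ι → ℝ) (B : ℝ) (J : Finset ι) : Prop where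
  tail_le : ∑ k ∈ Jᶜ, w k ≤ B
  lt_tail_add : ∀ i ∈ J, B < ∑ k ∈ Jᶜ, w k + w i
  le_of_notMem : ∀ i ∈ J, ∀ k ∉ J, w k ≤ w i

theorem exists_isDominantSet (w : ι → ℝ) {B : ℝ} (hB : 0 ≤ B) :
    ∃ J : Finset ι, IsDominantSet w B J := by
  let tail (J : Finset ι) : ℝ := ∑ k ∈ Jᶜ, w k
  have hne : ({J | tail J ≤ B} : Finset (Finset ι)).Nonempty :=
    ⟨univ, by simpa [tail] using hB⟩
  obtain ⟨J, hJmem, hmin⟩ := exists_min_image _ (fun J ↦ toLex (#J, tail J)) hne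
  have hJ : tail J ≤ B := (mem_filter.1 hJmem).2
  have card_le {J' : Finset ι} (h : tail J' ≤ B) : #J ≤ #J' ∧ (#J = #J' → tail J ≤ tail J') :=
    Prod.Lex.toLex_le_toLex'.1 (hmin J' (by simpa using h))
  have tail_erase {i : ι} (hi : i ∈ J) : tail (J.erase i) = tail J + w i := by
    simp only [tail]
    rw [compl_erase, sum_insert (by simpa using hi), add_comm]
  refine ⟨J, hJ, fun i hi ↦ ?_, fun i hi k hk ↦ ?_⟩
  · by_contra! h
    have := (card_le ((tail_erase hi).trans_le h)).1
    exact absurd (card_erase_lt_of_mem hi) this.not_gt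
  · by_contra! h
    have hk' : k ∉ J.erase i := fun hk' ↦ hk (mem_of_mem_erase hk')
    have hcard : #J = #(insert k (J.erase i)) := by
      rw [card_insert_of_notMem hk', card_erase_add_one hi]
    have htail : tail (insert k (J.erase i)) + w k = tail J + w i := by
      rw [← tail_erase hi]
      simp only [tail]
      rw [compl_insert, sum_erase_add _ _ (mem_compl.2 hk')]
    have := (card_le (J' := insert k (J.erase i)) (by linarith)).2 hcard
    linarith

theorem le_exp_of_mul_le {f w M : ℝ} (hM : 0 < M) (hwM : w ≤ M) (hf : f ≤ 1)
    (hfw : f * w ≤ 1 / 4) : f ≤ exp ((1 - w) / M) := by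
  rcases le_or_gt w 1 with hw | hw
  · exact hf.trans (one_le_exp (div_nonneg (by linarith) hM.le))
  · have hexp : 1 / 4 ≤ exp (-1) := by
      rw [exp_neg, one_div]
      exact inv_anti₀ (exp_pos 1) (by linarith [exp_one_lt_d9])
    calc f ≤ 1 / 4 := by nlinarith
      _ ≤ exp (-1) := hexp
      _ ≤ exp ((1 - w) / M) := exp_le_exp.2 (by rw [le_div_iff₀ hM]; linarith)

theorem mul_exp_neg_div_le {f w A : ℝ} (hw : 0 < w) (hA : 0 ≤ A) (hfw : f * w ≤ 1 / 4) :
    f * exp (-(A / w)) ≤ (4 * (w + A))⁻¹ := by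
  have hf : f ≤ (4 * w)⁻¹ := by
    rw [← one_div, le_div_iff₀ (by positivity)]
    linarith
  have hexp : exp (-(A / w)) ≤ w / (w + A) := by
    have heq : w / (w + A) = (A / w + 1)⁻¹ := by field_simp; ring
    rw [exp_neg, heq]
    exact inv_anti₀ (by positivity) (add_one_le_exp _)
  calc f * exp (-(A / w)) ≤ (4 * w)⁻¹ * (w / (w + A)) := by gcongr
    _ = (4 * (w + A))⁻¹ := by field_simp

namespace IsDominantSet

variable {w f : ι → ℝ} {B : ℝ} {J : Finset ι}

theorem pos (hJ : IsDominantSet w B J) (hB : 0 < B) {i : ι} (hi : i ∈ J) : 0 < w i := by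
  by_contra! hwi
  have htail : ∑ k ∈ Jᶜ, w k ≤ 0 :=
    sum_nonpos fun k hk ↦ (hJ.le_of_notMem i hi k (mem_compl.1 hk)).trans hwi
  linarith [hJ.lt_tail_add i hi]

theorem nonempty (hJ : IsDominantSet w B J) (hB : B < ∑ i, w i) : J.Nonempty := by
  rw [nonempty_iff_ne_empty]
  rintro rfl
  exact hB.not_ge (by simpa using hJ.tail_le)

theorem prod_compl_le_exp (hJ : IsDominantSet w B J) (hB : 0 < B) (hf0 : ∀ i, 0 ≤ f i)
    (hf1 : ∀ i, f i ≤ 1) (hfw : ∀ i, f i * w i ≤ 1 / 4) {i : ι} (hi : i ∈ J) :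
    ∏ k ∈ Jᶜ, f k ≤ exp 1 * exp (-((B - Fintype.card ι) / w i)) := by
  have hwi := hJ.pos hB hi
  have hcard : (#Jᶜ : ℝ) ≤ Fintype.card ι := mod_cast card_le_univ Jᶜ
  calc ∏ k ∈ Jᶜ, f k ≤ ∏ k ∈ Jᶜ, exp ((1 - w k) / w i) := by
        gcongr with k hk
        · exact fun k _ ↦ hf0 k
        · exact le_exp_of_mul_le hwi (hJ.le_of_notMem i hi k (mem_compl.1 hk)) (hf1 k) (hfw k)
    _ = exp ((#Jᶜ - ∑ k ∈ Jᶜ, w k) / w i) := by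
        rw [← exp_sum, ← sum_div, sum_sub_distrib, sum_const, nsmul_eq_mul, mul_one]
    _ ≤ exp (1 + -((B - Fintype.card ι) / w i)) := by
        have heq : 1 + -((B - Fintype.card ι) / w i) = (w i - (B - Fintype.card ι)) / w i := by
          field_simp
          ring
        rw [heq]
        refine exp_le_exp.2 (div_le_div_of_nonneg_right ?_ hwi.le)
        linarith [hJ.lt_tail_add i hi]
    _ = exp 1 * exp (-((B - Fintype.card ι) / w i)) := exp_add _ _

theorem prod_compl_le_prod_exp (hJ : IsDominantSet w B J) (hJne : J.Nonempty) (hB : 0 < B)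
    (hf0 : ∀ i, 0 ≤ f i) (hf1 : ∀ i, f i ≤ 1) (hfw : ∀ i, f i * w i ≤ 1 / 4) :
    ∏ k ∈ Jᶜ, f k ≤ exp 1 * ∏ i ∈ J, exp (-((B - Fintype.card ι) / #J / w i)) := by
  have hcard : (#J : ℝ) ≠ 0 := mod_cast hJne.card_ne_zero
  -- Take the geometric mean over `i ∈ J` of the bounds `prod_compl_le_exp`.
  rw [← pow_le_pow_iff_left₀ (prod_nonneg fun k _ ↦ hf0 k) (by positivity) hJne.card_ne_zero]
  calc (∏ k ∈ Jᶜ, f k) ^ #J = ∏ _i ∈ J, ∏ k ∈ Jᶜ, f k := (prod_const _).symm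
    _ ≤ ∏ i ∈ J, exp 1 * exp (-((B - Fintype.card ι) / w i)) := by
        gcongr with i hi
        · exact fun _ _ ↦ prod_nonneg fun k _ ↦ hf0 k
        · exact hJ.prod_compl_le_exp hB hf0 hf1 hfw hi
    _ = (exp 1 * ∏ i ∈ J, exp (-((B - Fintype.card ι) / #J / w i))) ^ #J := by
        rw [prod_mul_distrib, prod_const, mul_pow, ← prod_pow]
        congr 1
        refine prod_congr rfl fun i _ ↦ ?_
        rw [← exp_nat_mul]
        field_simp

theorem prod_le (hJ : IsDominantSet w B J) (hJne : J.Nonempty) (hB : 0 < B)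
    (hcard : Fintype.card ι ≤ B) (hf0 : ∀ i, 0 ≤ f i) (hf1 : ∀ i, f i ≤ 1)
    (hfw : ∀ i, f i * w i ≤ 1 / 4) :
    ∏ i, f i ≤ exp 1 * ∏ i ∈ J, (4 * (w i + (B - Fintype.card ι) / #J))⁻¹ := by
  set A := (B - Fintype.card ι) / #J
  have hA : 0 ≤ A := div_nonneg (by linarith) (Nat.cast_nonneg _)
  calc ∏ i, f i = (∏ i ∈ J, f i) * ∏ k ∈ Jᶜ, f k := (prod_mul_prod_compl J f).symm
    _ ≤ (∏ i ∈ J, f i) * (exp 1 * ∏ i ∈ J, exp (-(A / w i))) :=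
        mul_le_mul_of_nonneg_left (hJ.prod_compl_le_prod_exp hJne hB hf0 hf1 hfw)
          (prod_nonneg fun i _ ↦ hf0 i)
    _ = exp 1 * ∏ i ∈ J, f i * exp (-(A / w i)) := by rw [prod_mul_distrib]; ring
    _ ≤ exp 1 * ∏ i ∈ J, (4 * (w i + A))⁻¹ := by
        gcongr with i hi
        · exact fun i _ ↦ mul_nonneg (hf0 i) (exp_pos _).le
        · exact mul_exp_neg_div_le (hJ.pos hB hi) hA (hfw i)

end IsDominantSet

end DominantCoordinates

section Packing

theorem sum_int_le_two_mul {f : ℤ → ℝ} (hf0 : ∀ k, 0 ≤ f k) (hf : ∀ k, f (-(k + 1)) = f k)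
    {C : ℝ} (hC : ∀ N, ∑ n ∈ range N, f n ≤ C) (K : Finset ℤ) : ∑ k ∈ K, f k ≤ 2 * C := by
  have hIco (N : ℕ) : ∑ k ∈ Ico (-N : ℤ) N, f k = 2 * ∑ n ∈ range N, f n := by
    induction N with
    | zero => simp
    | succ N ih =>
      rw [Nat.cast_succ, Ico_succ_succ, sum_union (by simp), sum_pair (by lia), ih, hf,
        sum_range_succ]
      ring
  let N := K.sup Int.natAbs + 1
  have hK : K ⊆ Ico (-N : ℤ) N := fun k hk ↦ by
    have := le_sup (f := Int.natAbs) hk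
    rw [mem_Ico]
    lia
  calc ∑ k ∈ K, f k ≤ ∑ k ∈ Ico (-N : ℤ) N, f k :=
        sum_le_sum_of_subset_of_nonneg hK fun k _ _ ↦ hf0 k
    _ ≤ 2 * C := by rw [hIco]; gcongr; exact hC N

variable {κ ι : Type*} [Fintype ι] {S : Finset κ} {x : κ → ι → ℝ}

theorem injOn_floor_div_of_separated [Nonempty ι] {s : ℝ} (hs : 0 < s)
    (hsep : ∀ a ∈ S, ∀ b ∈ S, a ≠ b → Fintype.card ι * s ^ 2 ≤ ∑ i, (x a i - x b i) ^ 2) :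
    Set.InjOn (fun a i ↦ ⌊x a i / s⌋) S := by
  intro a ha b hb hab
  by_contra hne
  have hcoord (i : ι) : (x a i - x b i) ^ 2 < s ^ 2 := by
    have h := Int.abs_sub_lt_one_of_floor_eq_floor (congrFun hab i)
    rw [← sub_div, abs_div, abs_of_pos hs, div_lt_one hs] at h
    exact sq_lt_sq.2 (by rwa [abs_of_pos hs])
  have hlt : ∑ i, (x a i - x b i) ^ 2 < ∑ _i : ι, s ^ 2 :=
    sum_lt_sum_of_nonempty univ_nonempty fun i _ ↦ hcoord i
  rw [sum_const, nsmul_eq_mul, card_univ] at hlt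
  exact (hsep a ha b hb hne).not_gt hlt

theorem sum_prod_comp_le_pow_of_injOn {γ : Type*} {c : κ → ι → γ} (hc : Set.InjOn c S)
    {K : Finset γ} (hK : ∀ a ∈ S, ∀ i, c a i ∈ K) {G : γ → ℝ} (hG : ∀ k, 0 ≤ G k) :
    ∑ a ∈ S, ∏ i, G (c a i) ≤ (∑ k ∈ K, G k) ^ Fintype.card ι :=
  calc ∑ a ∈ S, ∏ i, G (c a i) = ∑ b ∈ S.image c, ∏ i, G (b i) :=
        (sum_image (f := fun b ↦ ∏ i, G (b i)) hc).symm
    _ ≤ ∑ b ∈ Fintype.piFinset fun _ : ι ↦ K, ∏ i, G (b i) :=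
        sum_le_sum_of_subset_of_nonneg
          (image_subset_iff.2 fun a ha ↦ Fintype.mem_piFinset.2 (hK a ha))
          fun b _ _ ↦ prod_nonneg fun i _ ↦ hG _
    _ = (∑ k ∈ K, G k) ^ Fintype.card ι := by rw [sum_prod_piFinset, prod_const, card_univ]

/-- The left-hand side is the distance from the origin to the cell `[k * s, (k + 1) * s)` that
contains `y`. -/
theorem max_floor_div_mul_le_abs {s : ℝ} (hs : 0 < s) (y : ℝ) :
    ((max ⌊y / s⌋ (-(⌊y / s⌋ + 1)) : ℤ) : ℝ) * s ≤ |y| := by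
  have hlo : ⌊y / s⌋ * s ≤ y := (le_div_iff₀ hs).1 (Int.floor_le _)
  have hhi : y < (⌊y / s⌋ + 1) * s := (div_lt_iff₀ hs).1 (Int.lt_floor_add_one _)
  push_cast
  rw [max_mul_of_nonneg _ _ hs.le]
  exact max_le (hlo.trans (le_abs_self y)) (by linarith [neg_le_abs y])

theorem sum_prod_abs_le_pow_of_separated [Nonempty ι] {s : ℝ} (hs : 0 < s)
    (hsep : ∀ a ∈ S, ∀ b ∈ S, a ≠ b → Fintype.card ι * s ^ 2 ≤ ∑ i, (x a i - x b i) ^ 2)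
    {g : ℝ → ℝ} (hg0 : ∀ y, 0 ≤ g y) (hg : AntitoneOn g (Set.Ici 0)) {C : ℝ}
    (hC : ∀ N, ∑ n ∈ range N, g (n * s) ≤ C) :
    ∑ a ∈ S, ∏ i, g |x a i| ≤ (2 * C) ^ Fintype.card ι := by
  let G (k : ℤ) : ℝ := g ((max k (-(k + 1)) : ℤ) * s)
  let K : Finset ℤ := S.biUnion fun a ↦ univ.image fun i ↦ ⌊x a i / s⌋
  have hK : ∀ a ∈ S, ∀ i, ⌊x a i / s⌋ ∈ K := fun a ha i ↦
    mem_biUnion.2 ⟨a, ha, mem_image_of_mem (fun i ↦ ⌊x a i / s⌋) (mem_univ i)⟩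
  have hgG (y : ℝ) : g |y| ≤ G ⌊y / s⌋ := by
    have hnonneg : 0 ≤ max ⌊y / s⌋ (-(⌊y / s⌋ + 1)) := by lia
    exact hg (mul_nonneg (Int.cast_nonneg hnonneg) hs.le) (Set.mem_Ici.2 (abs_nonneg y))
      (max_floor_div_mul_le_abs hs y)
  have hGsymm (k : ℤ) : G (-(k + 1)) = G k := by
    have : max (-(k + 1)) (-(-(k + 1) + 1)) = max k (-(k + 1)) := by lia
    simp only [G, this]
  have hGnat (n : ℕ) : G n = g (n * s) := by
    have : max (n : ℤ) (-(n + 1)) = n := by lia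
    simp only [G, this, Int.cast_natCast]
  have hGsum : ∑ k ∈ K, G k ≤ 2 * C :=
    sum_int_le_two_mul (fun k ↦ hg0 _) hGsymm
      (fun N ↦ (sum_congr rfl fun n _ ↦ hGnat n).trans_le (hC N)) K
  calc ∑ a ∈ S, ∏ i, g |x a i| ≤ ∑ a ∈ S, ∏ i, G ⌊x a i / s⌋ :=
        sum_le_sum fun a _ ↦ prod_le_prod (fun i _ ↦ hg0 _) fun i _ ↦ hgG (x a i)
    _ ≤ (∑ k ∈ K, G k) ^ Fintype.card ι :=
        sum_prod_comp_le_pow_of_injOn (injOn_floor_div_of_separated hs hsep) hK fun k ↦ hg0 _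
    _ ≤ (2 * C) ^ Fintype.card ι :=
        pow_le_pow_left₀ (sum_nonneg fun k _ ↦ hg0 _) hGsum _

theorem sum_range_one_div_sq_add_le (N : ℕ) :
    ∑ n ∈ range N, 1 / ((n : ℝ) ^ 2 / 2 + 1 / 9) ≤ 13 := by
  have htelescope (N : ℕ) :
      ∑ n ∈ range (N + 1), 1 / ((n : ℝ) ^ 2 / 2 + 1 / 9) ≤ 13 - 2 / ((N : ℝ) + 1 / 2) := by
    induction N with
    | zero => norm_num
    | succ N ih =>
      have hterm : 1 / (((N + 1 : ℕ) : ℝ) ^ 2 / 2 + 1 / 9) ≤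
          2 / ((N : ℝ) + 1 / 2) - 2 / (((N + 1 : ℕ) : ℝ) + 1 / 2) := by
        push_cast
        rw [div_sub_div _ _ (by positivity) (by positivity),
          div_le_div_iff₀ (by positivity) (by positivity)]
        nlinarith [(N.cast_nonneg : (0 : ℝ) ≤ N)]
      rw [sum_range_succ]
      linarith
  calc ∑ n ∈ range N, 1 / ((n : ℝ) ^ 2 / 2 + 1 / 9)
      ≤ ∑ n ∈ range (N + 1), 1 / ((n : ℝ) ^ 2 / 2 + 1 / 9) :=
        sum_le_sum_of_subset_of_nonneg (range_mono N.le_succ) fun n _ _ ↦ by positivity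
    _ ≤ 13 - 2 / ((N : ℝ) + 1 / 2) := htelescope N
    _ ≤ 13 := sub_le_self _ (by positivity)

theorem sum_prod_inv_sq_add_le_of_separated [Nonempty ι] {X A : ℝ} (hX : 0 < X)
    (hsep : ∀ a ∈ S, ∀ b ∈ S, a ≠ b → X / 2 ≤ ∑ i, (x a i - x b i) ^ 2)
    (hA : X / 9 / Fintype.card ι ≤ A) :
    ∑ a ∈ S, ∏ i, (4 * (x a i ^ 2 + A))⁻¹ ≤
      (13 / 2 / X * Fintype.card ι) ^ Fintype.card ι := by
  set j := Fintype.card ι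
  have hj : (0 : ℝ) < j := mod_cast Fintype.card_pos
  have hA0 : 0 < A := lt_of_lt_of_le (by positivity) hA
  set s := √(X / (2 * j))
  have hs2 : s ^ 2 = X / (2 * j) := sq_sqrt (by positivity)
  have hcells : j * s ^ 2 = X / 2 := by rw [hs2]; field_simp
  have hterm (n : ℕ) :
      (4 * ((n * s) ^ 2 + A))⁻¹ ≤ j / (4 * X) * (1 / ((n : ℝ) ^ 2 / 2 + 1 / 9)) :=
    calc (4 * ((n * s) ^ 2 + A))⁻¹ ≤ (4 * ((n * s) ^ 2 + X / 9 / j))⁻¹ := by gcongr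
      _ = j / (4 * X) * (1 / ((n : ℝ) ^ 2 / 2 + 1 / 9)) := by rw [mul_pow, hs2]; field_simp
  have hline (N : ℕ) : ∑ n ∈ range N, (4 * ((n * s) ^ 2 + A))⁻¹ ≤ j / (4 * X) * 13 := by
    refine (sum_le_sum fun n _ ↦ hterm n).trans ?_
    rw [← mul_sum]
    gcongr
    exact sum_range_one_div_sq_add_le N
  have hanti : AntitoneOn (fun y : ℝ ↦ (4 * (y ^ 2 + A))⁻¹) (Set.Ici 0) :=
    fun y (hy : 0 ≤ y) z _ hyz ↦ by dsimp only; gcongr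
  calc ∑ a ∈ S, ∏ i, (4 * (x a i ^ 2 + A))⁻¹ = ∑ a ∈ S, ∏ i, (4 * (|x a i| ^ 2 + A))⁻¹ := by
        simp only [sq_abs]
    _ ≤ (2 * (j / (4 * X) * 13)) ^ j :=
        sum_prod_abs_le_pow_of_separated (by positivity)
          (fun a ha b hb hab ↦ hcells.trans_le (hsep a ha b hb hab)) (fun y ↦ by positivity)
          hanti hline
    _ = (13 / 2 / X * j) ^ j := by ring

end Packing

section WeightedSum

variable {κ ι : Type*} [Fintype ι]

theorem choose_mul_mul_pow_le {c : ℝ} (hc : 0 ≤ c) (n k : ℕ) :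
    n.choose k * (c * k) ^ k ≤ (c * n * exp 1) ^ k :=
  calc n.choose k * (c * k) ^ k ≤ (n : ℝ) ^ k / k.factorial * (c * k) ^ k := by
        gcongr
        exact Nat.choose_le_pow_div k n
    _ = (c * n) ^ k * ((k : ℝ) ^ k / k.factorial) := by rw [mul_pow, mul_pow]; ring
    _ ≤ (c * n) ^ k * exp k := by
        gcongr
        exact pow_div_factorial_le_exp _ k.cast_nonneg k
    _ = (c * n * exp 1) ^ k := by rw [mul_pow _ (exp 1), ← exp_nat_mul, mul_one]

theorem sum_nonempty_mul_card_pow_card_le {c : ℝ} (hc : 0 ≤ c)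
    (hq : c * Fintype.card ι * exp 1 < 1) :
    ∑ J ∈ univ.erase (∅ : Finset ι), (c * #J) ^ #J ≤
      c * Fintype.card ι * exp 1 / (1 - c * Fintype.card ι * exp 1) := by
  set n := Fintype.card ι
  calc ∑ J ∈ univ.erase (∅ : Finset ι), (c * #J) ^ #J
      = ∑ k ∈ range (n + 1), n.choose k * (c * k) ^ k - 1 := by
        rw [sum_erase_eq_sub (mem_univ _), ← powerset_univ,
          sum_powerset_apply_card fun k ↦ (c * k) ^ k, card_univ]
        simp only [nsmul_eq_mul, card_empty, pow_zero, n]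
    _ = ∑ k ∈ Ico 1 (n + 1), n.choose k * (c * k) ^ k := by
        rw [range_eq_Ico, sum_eq_sum_Ico_succ_bot n.succ_pos]
        simp
    _ ≤ ∑ k ∈ Ico 1 (n + 1), (c * n * exp 1) ^ k :=
        sum_le_sum fun k _ ↦ choose_mul_mul_pow_le hc n k
    _ ≤ (c * n * exp 1) ^ 1 / (1 - c * n * exp 1) :=
        geom_sum_Ico_le_of_lt_one (by positivity) hq
    _ = c * n * exp 1 / (1 - c * n * exp 1) := by rw [pow_one]

variable {S : Finset κ} {x : κ → ι → ℝ} {F : κ → ι → ℝ} {X : ℝ}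

theorem sum_prod_le_of_isDominantSet {J : Finset ι} (hJne : J.Nonempty) (hX : 0 < X)
    (hcard : 72 * Fintype.card ι ≤ X) (hF0 : ∀ a i, 0 ≤ F a i) (hF1 : ∀ a i, F a i ≤ 1)
    (hF : ∀ a i, F a i * x a i ^ 2 ≤ 1 / 4)
    (hsep : ∀ a ∈ S, ∀ b ∈ S, a ≠ b → X ≤ ∑ i, (x a i - x b i) ^ 2)
    (hJ : ∀ a ∈ S, IsDominantSet (fun i ↦ x a i ^ 2) (X / 8) J) :
    ∑ a ∈ S, ∏ i, F a i ≤ exp 1 * (13 / 2 / X * #J) ^ #J := by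
  have hsepJ : ∀ a ∈ S, ∀ b ∈ S, a ≠ b → X / 2 ≤ ∑ i : J, (x a i - x b i) ^ 2 := by
    intro a ha b hb hab
    have htail : ∑ i ∈ Jᶜ, (x a i - x b i) ^ 2 ≤ X / 2 :=
      calc ∑ i ∈ Jᶜ, (x a i - x b i) ^ 2 ≤ ∑ i ∈ Jᶜ, (2 * x a i ^ 2 + 2 * x b i ^ 2) :=
            sum_le_sum fun i _ ↦ by nlinarith [sq_nonneg (x a i + x b i)]
        _ = 2 * ∑ i ∈ Jᶜ, x a i ^ 2 + 2 * ∑ i ∈ Jᶜ, x b i ^ 2 := by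
            rw [sum_add_distrib, mul_sum, mul_sum]
        _ ≤ X / 2 := by linarith [(hJ a ha).tail_le, (hJ b hb).tail_le]
    have htotal := hsep a ha b hb hab
    rw [← sum_compl_add_sum J] at htotal
    rw [sum_coe_sort J fun i ↦ (x a i - x b i) ^ 2]
    linarith
  have := hJne.coe_sort
  have hpack := sum_prod_inv_sq_add_le_of_separated (A := (X / 8 - Fintype.card ι) / #J) hX hsepJ
    (by rw [Fintype.card_coe]; gcongr; linarith)
  rw [Fintype.card_coe] at hpack
  calc ∑ a ∈ S, ∏ i, F a i
      ≤ ∑ a ∈ S, exp 1 * ∏ i ∈ J, (4 * (x a i ^ 2 + (X / 8 - Fintype.card ι) / #J))⁻¹ :=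
        sum_le_sum fun a ha ↦
          (hJ a ha).prod_le hJne (by positivity) (by linarith) (hF0 a) (hF1 a) (hF a)
    _ = exp 1 * ∑ a ∈ S, ∏ i : J, (4 * (x a i ^ 2 + (X / 8 - Fintype.card ι) / #J))⁻¹ := by
        rw [mul_sum]
        exact sum_congr rfl fun a _ ↦ by
          rw [prod_coe_sort J fun i ↦ (4 * (x a i ^ 2 + (X / 8 - Fintype.card ι) / #J))⁻¹]
    _ ≤ exp 1 * (13 / 2 / X * #J) ^ #J := by gcongr

theorem sum_prod_le_of_separated (hX : 0 < X)
    (hcard : 72 * Fintype.card ι ≤ X) (hF0 : ∀ a i, 0 ≤ F a i) (hF1 : ∀ a i, F a i ≤ 1)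
    (hF : ∀ a i, F a i * x a i ^ 2 ≤ 1 / 4)
    (hsep : ∀ a ∈ S, ∀ b ∈ S, a ≠ b → X ≤ ∑ i, (x a i - x b i) ^ 2)
    (hfar : ∀ a ∈ S, X / 4 ≤ ∑ i, x a i ^ 2) :
    ∑ a ∈ S, ∏ i, F a i ≤ 72 * Fintype.card ι / X := by
  choose J hJ using fun a ↦ exists_isDominantSet (fun i ↦ x a i ^ 2) (by positivity : 0 ≤ X / 8)
  have hJne : ∀ a ∈ S, J a ∈ univ.erase ∅ := fun a ha ↦
    mem_erase.2 ⟨((hJ a).nonempty (by linarith [hfar a ha])).ne_empty, mem_univ _⟩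
  have hfiber : ∀ I ∈ univ.erase (∅ : Finset ι),
      ∑ a ∈ S with J a = I, ∏ i, F a i ≤ exp 1 * (13 / 2 / X * #I) ^ #I := fun I hI ↦
    sum_prod_le_of_isDominantSet (nonempty_iff_ne_empty.2 (ne_of_mem_erase hI)) hX hcard hF0 hF1 hF
      (fun a ha b hb ↦ hsep a (mem_filter.1 ha).1 b (mem_filter.1 hb).1)
      fun a ha ↦ (mem_filter.1 ha).2 ▸ hJ a
  set q := 13 / 2 / X * Fintype.card ι * exp 1 with hq
  have hq4 : q ≤ 1 / 4 := by
    have : q = 13 / 2 * exp 1 * Fintype.card ι / X := by rw [hq]; ring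
    rw [this, div_le_iff₀ hX]
    nlinarith [exp_one_lt_d9, (Fintype.card ι).cast_nonneg (α := ℝ)]
  calc ∑ a ∈ S, ∏ i, F a i = ∑ I ∈ univ.erase ∅, ∑ a ∈ S with J a = I, ∏ i, F a i :=
        (sum_fiberwise_of_maps_to hJne _).symm
    _ ≤ ∑ I ∈ univ.erase (∅ : Finset ι), exp 1 * (13 / 2 / X * #I) ^ #I := sum_le_sum hfiber
    _ ≤ exp 1 * (q / (1 - q)) := by
        rw [← mul_sum]
        gcongr
        exact sum_nonempty_mul_card_pow_card_le (by positivity) (by linarith)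
    _ ≤ exp 1 * (q / (3 / 4)) := by gcongr; linarith
    _ = 26 / 3 * exp 1 ^ 2 * Fintype.card ι / X := by rw [hq]; ring
    _ ≤ 72 * Fintype.card ι / X := by
        gcongr
        nlinarith [exp_one_lt_d9, exp_one_gt_d9]

end WeightedSum

section Kernel

theorem periodic_deriv {f : ℝ → ℝ} {c : ℝ} (hf : Function.Periodic f c) :
    Function.Periodic (deriv f) c := fun t ↦ by
  rw [← deriv_comp_add_const, funext hf]

/-- Size and decay bounds at the scale `1 / M` for a function of one periodic variable. Since
`|t - round t|` is the distance from `t` to `ℤ`, they hold both for the Dirichlet kernel and for its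
derivative, normalized by its maximum. -/
structure HasDecayAtScale (M : ℝ) (g : ℝ → ℝ) : Prop where
  abs_le_one : ∀ t, |g t| ≤ 1
  abs_mul_le : ∀ t, |g t| * (M * |t - round t|) ≤ 1 / 2

theorem HasDecayAtScale.of_periodic {M : ℝ} {g : ℝ → ℝ} (hper : Function.Periodic g 1)
    (h1 : ∀ t, |g t| ≤ 1) (h2 : ∀ t, |t| ≤ 1 / 2 → |g t| * (M * |t|) ≤ 1 / 2) :
    HasDecayAtScale M g where
  abs_le_one := h1
  abs_mul_le t := by
    have hround : g (t - round t) = g t := by simpa using hper.sub_int_mul_eq (x := t) (round t)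
    simpa only [hround] using h2 _ (abs_sub_round t)

theorem HasDecayAtScale.sq_le_one {M : ℝ} {g : ℝ → ℝ} (hg : HasDecayAtScale M g) (t : ℝ) :
    g t ^ 2 ≤ 1 :=
  sq_le_one_iff_abs_le_one _ |>.2 (hg.abs_le_one t)

theorem HasDecayAtScale.sq_mul_le {M : ℝ} {g : ℝ → ℝ} (hM : 0 ≤ M) (hg : HasDecayAtScale M g)
    (t : ℝ) : g t ^ 2 * (M * (t - round t)) ^ 2 ≤ 1 / 4 := by
  have h := pow_le_pow_left₀ (by positivity) (hg.abs_mul_le t) 2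
  rw [mul_pow, mul_pow, sq_abs, sq_abs, ← mul_pow M] at h
  linarith

theorem two_mul_abs_le_abs_sin {t : ℝ} (ht : |t| ≤ 1 / 2) : 2 * |t| ≤ |sin (π * t)| := by
  have habs : |π * t| = π * |t| := by rw [abs_mul, abs_of_pos pi_pos]
  have h := mul_abs_le_abs_sin (x := π * t) (by rw [habs]; nlinarith [pi_pos])
  rwa [habs, ← mul_assoc, div_mul_cancel₀ _ pi_ne_zero] at h

variable (m : ℕ)

theorem periodic_dirKer : Function.Periodic (dirKer m) 1 := fun t ↦ by
  have hcos (k : ℤ) : cos (2 * π * k * (t + 1)) = cos (2 * π * k * t) := by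
    rw [← cos_add_int_mul_two_pi (2 * π * k * t) k]
    ring_nf
  simp only [dirKer, hcos]

theorem hasDerivAt_dirKer (t : ℝ) :
    HasDerivAt (dirKer m)
      ((2 * m + 1 : ℝ)⁻¹ *
        ∑ k ∈ Icc (-(m : ℤ)) m, -sin (2 * π * k * t) * (2 * π * k)) t := by
  refine (HasDerivAt.fun_sum fun k _ ↦ ?_).const_mul _
  simpa using ((hasDerivAt_id t).const_mul (2 * π * (k : ℝ))).cos

theorem abs_inv_mul_sum_Icc_le {f : ℤ → ℝ} {C : ℝ} (hf : ∀ k ∈ Icc (-(m : ℤ)) m, |f k| ≤ C) :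
    |(2 * m + 1 : ℝ)⁻¹ * ∑ k ∈ Icc (-(m : ℤ)) m, f k| ≤ C := by
  have hcard : ((Icc (-(m : ℤ)) m).card : ℝ) = 2 * m + 1 := by
    rw [Int.card_Icc, ← Int.cast_natCast, Int.toNat_of_nonneg (by lia)]
    push_cast
    ring
  rw [abs_mul, abs_of_pos (by positivity), inv_mul_le_iff₀ (by positivity), ← hcard]
  exact (abs_sum_le_sum_abs _ _).trans (by simpa using sum_le_card_nsmul _ _ _ hf)

theorem abs_dirKer_le_one (t : ℝ) : |dirKer m t| ≤ 1 :=
  abs_inv_mul_sum_Icc_le m fun _ _ ↦ abs_cos_le_one _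

theorem abs_deriv_dirKer_le (t : ℝ) : |deriv (dirKer m) t| ≤ 2 * π * m := by
  rw [(hasDerivAt_dirKer m t).deriv]
  refine abs_inv_mul_sum_Icc_le m fun k hk ↦ ?_
  have hkm : |(k : ℝ)| ≤ m := mod_cast abs_le.2 (mem_Icc.1 hk)
  calc |-sin (2 * π * k * t) * (2 * π * k)| = |sin (2 * π * k * t)| * (2 * π * |(k : ℝ)|) := by
        rw [abs_mul, abs_neg, abs_mul (2 * π), abs_of_pos two_pi_pos]
    _ ≤ 1 * (2 * π * m) := by
        gcongr
        exact abs_sin_le_one _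
    _ = 2 * π * m := one_mul _

theorem sin_mul_dirKer (t : ℝ) :
    sin (π * t) * dirKer m t = (2 * m + 1 : ℝ)⁻¹ * sin ((2 * m + 1) * π * t) := by
  suffices h : sin (π * t) * ∑ k ∈ Icc (-(m : ℤ)) m, cos (2 * π * k * t) =
      sin ((2 * m + 1) * π * t) by
    rw [dirKer, mul_left_comm, h]
  induction m with
  | zero => simp
  | succ m ih =>
    have hup : (2 * ((m + 1 : ℕ) : ℝ) + 1) * π * t = 2 * π * (m + 1) * t + π * t := by
      push_cast
      ring
    have hdown : (2 * (m : ℝ) + 1) * π * t = 2 * π * (m + 1) * t - π * t := by ring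
    have hneg : 2 * π * (-1 + -(m : ℝ)) * t = -(2 * π * (m + 1) * t) := by ring
    rw [Nat.cast_succ, sum_Icc_succ_eq_add_endpoints, mul_add, ih, hup, hdown, sin_add,
      sin_sub]
    push_cast
    rw [neg_add_rev, hneg, cos_neg]
    ring

theorem abs_dirKer_mul_le {t : ℝ} (ht : |t| ≤ 1 / 2) : |dirKer m t| * (m * |t|) ≤ 1 / 2 := by
  have hsin : |sin (π * t)| * |dirKer m t| ≤ (2 * m + 1 : ℝ)⁻¹ := by
    rw [← abs_mul, sin_mul_dirKer, abs_mul, abs_of_pos (by positivity)]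
    exact mul_le_of_le_one_right (by positivity) (abs_sin_le_one _)
  calc |dirKer m t| * (m * |t|) = m / 2 * (2 * |t| * |dirKer m t|) := by ring
    _ ≤ m / 2 * (2 * m + 1 : ℝ)⁻¹ := by
        gcongr
        exact (by gcongr; exact two_mul_abs_le_abs_sin ht : _ ≤ _).trans hsin
    _ ≤ 1 / 2 := by
        rw [← div_eq_mul_inv, div_le_iff₀ (by positivity)]
        linarith [(m.cast_nonneg : (0 : ℝ) ≤ m)]

theorem sin_mul_deriv_dirKer (t : ℝ) :
    sin (π * t) * deriv (dirKer m) t =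
      π * (cos ((2 * m + 1) * π * t) - cos (π * t) * dirKer m t) := by
  have hsin (c : ℝ) : HasDerivAt (fun t ↦ sin (c * t)) (cos (c * t) * c) t := by
    simpa using ((hasDerivAt_id t).const_mul c).sin
  have hleft := (hsin π).fun_mul (hasDerivAt_dirKer m t).differentiableAt.hasDerivAt
  rw [funext (sin_mul_dirKer m)] at hleft
  have h := hleft.unique ((hsin ((2 * m + 1) * π)).const_mul (2 * m + 1 : ℝ)⁻¹)
  have hcancel : (2 * m + 1 : ℝ)⁻¹ * (2 * m + 1) = 1 := inv_mul_cancel₀ (by positivity)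
  linear_combination h + π * cos ((2 * m + 1) * π * t) * hcancel

theorem abs_deriv_dirKer_mul_le {t : ℝ} (ht : |t| ≤ 1 / 2) : |deriv (dirKer m) t| * |t| ≤ π := by
  have hcos : |cos ((2 * m + 1) * π * t) - cos (π * t) * dirKer m t| ≤ 2 :=
    calc |cos ((2 * m + 1) * π * t) - cos (π * t) * dirKer m t|
        ≤ |cos ((2 * m + 1) * π * t)| + |cos (π * t)| * |dirKer m t| :=
          (abs_sub _ _).trans_eq (by rw [abs_mul])
      _ ≤ 1 + 1 * 1 := by
          gcongr
          exacts [abs_cos_le_one _, abs_cos_le_one _, abs_dirKer_le_one m t]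
      _ = 2 := by norm_num
  have hsin : |sin (π * t)| * |deriv (dirKer m) t| ≤ π * 2 := by
    rw [← abs_mul, sin_mul_deriv_dirKer, abs_mul, abs_of_pos pi_pos]
    gcongr
  have := mul_le_mul_of_nonneg_right (two_mul_abs_le_abs_sin ht) (abs_nonneg (deriv (dirKer m) t))
  linarith

theorem hasDecayAtScale_dirKer : HasDecayAtScale m (dirKer m) :=
  .of_periodic (periodic_dirKer m) (abs_dirKer_le_one m) fun _ ↦ abs_dirKer_mul_le m

theorem hasDecayAtScale_deriv_dirKer :
    HasDecayAtScale m (fun t ↦ deriv (dirKer m) t / (2 * π * m)) := by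
  have habs (t : ℝ) : |deriv (dirKer m) t / (2 * π * m)| = |deriv (dirKer m) t| / (2 * π * m) := by
    rw [abs_div, abs_of_nonneg (by positivity : (0 : ℝ) ≤ 2 * π * m)]
  have hper : Function.Periodic (fun t ↦ deriv (dirKer m) t / (2 * π * m)) 1 := fun t ↦ by
    simp only [periodic_deriv (periodic_dirKer m) t]
  refine .of_periodic hper (fun t ↦ ?_) fun t ht ↦ ?_
  · rw [habs]
    exact div_le_one_of_le₀ (abs_deriv_dirKer_le m t) (by positivity)
  · calc |deriv (dirKer m) t / (2 * π * m)| * (m * |t|)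
        = |deriv (dirKer m) t| * |t| * m / (2 * π * m) := by rw [habs]; ring
      _ ≤ π * m / (2 * π * m) := by gcongr; exact abs_deriv_dirKer_mul_le m ht
      _ = 1 / 2 * (π * m / (π * m)) := by ring
      _ ≤ 1 / 2 := mul_le_of_le_one_right (by norm_num) (div_self_le_one _)

theorem gradient_sqDirKer_apply {d : ℕ} (x : EuclideanSpace ℝ (Fin d)) (i : Fin d) :
    gradient (sqDirKer d m) x i =
      deriv (dirKer m) (x i) * ∏ j ∈ univ.erase i, dirKer m (x j) := by
  have hcoord (j : Fin d) : HasFDerivAt (fun x : EuclideanSpace ℝ (Fin d) ↦ dirKer m (x j))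
      (deriv (dirKer m) (x j) • (EuclideanSpace.proj j : EuclideanSpace ℝ (Fin d) →L[ℝ] ℝ)) x :=
    HasDerivAt.comp_hasFDerivAt (h₂ := dirKer m) (f := fun x : EuclideanSpace ℝ (Fin d) ↦ x j) x
      (hasDerivAt_dirKer m (x j)).differentiableAt.hasDerivAt
      (EuclideanSpace.proj j : EuclideanSpace ℝ (Fin d) →L[ℝ] ℝ).hasFDerivAt
  have hfderiv : fderiv ℝ (sqDirKer d m) x = _ :=
    (HasFDerivAt.finsetProd fun j (_ : j ∈ univ) ↦ hcoord j).fderiv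
  calc gradient (sqDirKer d m) x i
      = inner ℝ (gradient (sqDirKer d m) x) (EuclideanSpace.single i 1) := by
        rw [EuclideanSpace.inner_single_right, one_mul, conj_trivial]
    _ = fderiv ℝ (sqDirKer d m) x (EuclideanSpace.single i 1) := inner_gradient_left
    _ = deriv (dirKer m) (x i) * ∏ j ∈ univ.erase i, dirKer m (x j) := by
        rw [hfderiv]
        simp [mul_comm]

end Kernel

section Torus

variable {d : ℕ}

/-- The representative of `ξ` modulo `ℤ^d` with all coordinates in `[-1/2, 1/2]`; its norm is the
distance from `ξ` to the origin of the torus. -/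
def centeredRep (ξ : EuclideanSpace ℝ (Fin d)) : EuclideanSpace ℝ (Fin d) :=
  WithLp.toLp 2 fun i ↦ ξ i - round (ξ i)

theorem torusDist_le_norm {x y z : EuclideanSpace ℝ (Fin d)} (n : Fin d → ℤ)
    (h : ∀ i, z i = x i - y i + n i) : torusDist x y ≤ ‖z‖ := by
  have hz : z = x - y + ∑ i, (n i : ℝ) • EuclideanSpace.single i (1 : ℝ) := by
    ext j
    simp [h, Pi.single_apply]
  rw [hz]
  exact ciInf_le ⟨0, by rintro _ ⟨n, rfl⟩; exact norm_nonneg _⟩ n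

theorem torusDist_le_norm_centeredRep (x y : EuclideanSpace ℝ (Fin d)) :
    torusDist x y ≤ ‖centeredRep (x - y)‖ :=
  torusDist_le_norm (fun i ↦ -round ((x - y) i)) fun i ↦ by
    simp [centeredRep, sub_eq_add_neg]

theorem torusDist_le_norm_centeredRep_sub (ω x y : EuclideanSpace ℝ (Fin d)) :
    torusDist x y ≤ ‖centeredRep (ω - x) - centeredRep (ω - y)‖ := by
  rw [norm_sub_rev]
  refine torusDist_le_norm (fun i ↦ round ((ω - x) i) - round ((ω - y) i)) fun i ↦ ?_
  simp only [centeredRep, PiLp.sub_apply]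
  push_cast
  ring

end Torus

section TensorKernels

variable {d m : ℕ} {κ : Type*} {β Δ : ℝ}

theorem sum_prod_sq_le_of_separated {M : ℝ} (hM : 0 ≤ M) {g : Fin d → ℝ → ℝ}
    (hg : ∀ i, HasDecayAtScale M (g i)) (hβ0 : 0 < β) (hβ : 72 * d ≤ β ^ 2) (hΔ : β ≤ M * Δ)
    {S : Finset κ} {θ : κ → EuclideanSpace ℝ (Fin d)}
    (hsep : ∀ j ∈ S, ∀ k ∈ S, j ≠ k → Δ ≤ torusDist (θ j) (θ k))
    {ω : EuclideanSpace ℝ (Fin d)} (hfar : ∀ ℓ ∈ S, Δ / 2 ≤ torusDist ω (θ ℓ)) :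
    ∑ ℓ ∈ S, ∏ i, g i ((ω - θ ℓ) i) ^ 2 ≤ 72 * d / β ^ 2 := by
  have hnorm {ξ : EuclideanSpace ℝ (Fin d)} {c : ℝ} (hc : 0 ≤ c) (h : c * Δ ≤ ‖ξ‖) :
      (c * β) ^ 2 ≤ ∑ i, (M * ξ i) ^ 2 := by
    simp only [mul_pow M, ← mul_sum, ← EuclideanSpace.real_norm_sq_eq]
    rw [← mul_pow]
    refine pow_le_pow_left₀ (by positivity) ?_ 2
    calc c * β ≤ c * (M * Δ) := by gcongr
      _ = M * (c * Δ) := by ring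
      _ ≤ M * ‖ξ‖ := by gcongr
  have h := sum_prod_le_of_separated (S := S) (X := β ^ 2)
    (x := fun ℓ i ↦ M * centeredRep (ω - θ ℓ) i) (F := fun ℓ i ↦ g i ((ω - θ ℓ) i) ^ 2)
    (by positivity) (by rwa [Fintype.card_fin]) (fun ℓ i ↦ sq_nonneg _)
    (fun ℓ i ↦ (hg i).sq_le_one _) (fun ℓ i ↦ (hg i).sq_mul_le hM _)
    (fun j hj k hk hjk ↦ ?_) (fun ℓ hℓ ↦ ?_)
  · rwa [Fintype.card_fin] at h
  · have hdist : 1 * Δ ≤ ‖centeredRep (ω - θ j) - centeredRep (ω - θ k)‖ :=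
      (one_mul Δ).trans_le ((hsep j hj k hk hjk).trans (torusDist_le_norm_centeredRep_sub ω _ _))
    simpa only [one_mul, PiLp.sub_apply, mul_sub] using hnorm zero_le_one hdist
  · have hdist : 1 / 2 * Δ ≤ ‖centeredRep (ω - θ ℓ)‖ := by
      linarith [hfar ℓ hℓ, torusDist_le_norm_centeredRep ω (θ ℓ)]
    linarith [hnorm one_half_pos.le hdist]

variable {S : Finset κ} {θ : κ → EuclideanSpace ℝ (Fin d)} {ω : EuclideanSpace ℝ (Fin d)}

theorem sum_sqDirKer_sq_le (hβ0 : 0 < β) (hβ : 72 * d ≤ β ^ 2) (hΔ : β ≤ m * Δ)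
    (hsep : ∀ j ∈ S, ∀ k ∈ S, j ≠ k → Δ ≤ torusDist (θ j) (θ k))
    (hfar : ∀ ℓ ∈ S, Δ / 2 ≤ torusDist ω (θ ℓ)) :
    ∑ ℓ ∈ S, sqDirKer d m (ω - θ ℓ) ^ 2 ≤ 72 * d / β ^ 2 := by
  simp only [sqDirKer, ← prod_pow]
  exact sum_prod_sq_le_of_separated m.cast_nonneg (fun _ ↦ hasDecayAtScale_dirKer m) hβ0 hβ hΔ
    hsep hfar

theorem sum_gradient_sqDirKer_apply_sq_le (hβ0 : 0 < β) (hβ : 72 * d ≤ β ^ 2) (hΔ : β ≤ m * Δ)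
    (hsep : ∀ j ∈ S, ∀ k ∈ S, j ≠ k → Δ ≤ torusDist (θ j) (θ k))
    (hfar : ∀ ℓ ∈ S, Δ / 2 ≤ torusDist ω (θ ℓ)) (i : Fin d) :
    ∑ ℓ ∈ S, gradient (sqDirKer d m) (ω - θ ℓ) i ^ 2 ≤ (2 * π * m) ^ 2 * (72 * d / β ^ 2) := by
  have hm : (m : ℝ) ≠ 0 := fun h ↦ by rw [h, zero_mul] at hΔ; linarith
  let g : Fin d → ℝ → ℝ :=
    Function.update (fun _ ↦ dirKer m) i fun t ↦ deriv (dirKer m) t / (2 * π * m)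
  have hg (j : Fin d) : HasDecayAtScale m (g j) := by
    rcases eq_or_ne j i with rfl | hj
    · simpa only [g, Function.update_self] using hasDecayAtScale_deriv_dirKer m
    · simpa only [g, Function.update_of_ne hj] using hasDecayAtScale_dirKer m
  have hgrad (x : EuclideanSpace ℝ (Fin d)) :
      gradient (sqDirKer d m) x i = 2 * π * m * ∏ j, g j (x j) := by
    have hne : ∏ j ∈ univ.erase i, g j (x j) = ∏ j ∈ univ.erase i, dirKer m (x j) :=
      prod_congr rfl fun j hj ↦ by
        simp only [g, Function.update_of_ne (ne_of_mem_erase hj)]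
    rw [gradient_sqDirKer_apply, ← mul_prod_erase _ _ (mem_univ i), hne]
    simp only [g, Function.update_self]
    field_simp
  simp only [hgrad, mul_pow (2 * π * m), ← prod_pow, ← mul_sum]
  gcongr
  exact sum_prod_sq_le_of_separated m.cast_nonneg hg hβ0 hβ hΔ hsep hfar

theorem sum_norm_gradient_sqDirKer_sq_le (hβ0 : 0 < β) (hβ : 72 * d ≤ β ^ 2) (hΔ : β ≤ m * Δ)
    (hsep : ∀ j ∈ S, ∀ k ∈ S, j ≠ k → Δ ≤ torusDist (θ j) (θ k))
    (hfar : ∀ ℓ ∈ S, Δ / 2 ≤ torusDist ω (θ ℓ)) :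
    ∑ ℓ ∈ S, ‖gradient (sqDirKer d m) (ω - θ ℓ)‖ ^ 2 ≤ 288 * π ^ 2 * d ^ 2 * m ^ 2 / β ^ 2 := by
  simp only [EuclideanSpace.real_norm_sq_eq]
  rw [sum_comm]
  refine (sum_le_card_nsmul _ _ _ fun i _ ↦
    sum_gradient_sqDirKer_apply_sq_le hβ0 hβ hΔ hsep hfar i).trans_eq ?_
  rw [card_fin, nsmul_eq_mul]
  ring

theorem seventyTwo_le_sixteen_mul_pi_sq : 72 ≤ 16 * π ^ 2 := by
  nlinarith [pi_gt_three]

theorem seventyTwo_mul_le_sq_of_four_mul_pi_mul_sqrt_le {x β : ℝ} (hx : 0 ≤ x)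
    (h : 4 * π * √x ≤ β) : 72 * x ≤ β ^ 2 :=
  calc 72 * x ≤ 16 * π ^ 2 * x := by
        gcongr
        exact seventyTwo_le_sixteen_mul_pi_sq
    _ = (4 * π * √x) ^ 2 := by rw [mul_pow, sq_sqrt hx]; ring
    _ ≤ β ^ 2 := by gcongr

theorem seventyTwo_mul_le_sixteen_mul_pi_sq_mul_sq {x : ℝ} (hx : 1 ≤ x) :
    72 * x ≤ 16 * π ^ 2 * x ^ 2 := by
  gcongr
  · exact seventyTwo_le_sixteen_mul_pi_sq
  · exact le_self_pow₀ hx two_ne_zero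

theorem mul_pi_sq_mul_sq_le_mul_pi_pow_four_mul_pow_three {x : ℝ} (hx : 1 ≤ x) :
    288 * π ^ 2 * x ^ 2 ≤ 64 * π ^ 4 * x ^ 3 :=
  calc 288 * π ^ 2 * x ^ 2 = 4 * π ^ 2 * x * (72 * x) := by ring
    _ ≤ 4 * π ^ 2 * x * (16 * π ^ 2 * x ^ 2) := by
        gcongr 4 * π ^ 2 * x * ?_
        exact seventyTwo_mul_le_sixteen_mul_pi_sq_mul_sq hx
    _ = 64 * π ^ 4 * x ^ 3 := by ring

theorem stmt9_general {d m : ℕ} {κ : Type*} {β Δ : ℝ} (hβ0 : 0 < β) (hβ : 72 * d ≤ β ^ 2)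
    (hΔ : β ≤ m * Δ) {S : Finset κ} {θ : κ → EuclideanSpace ℝ (Fin d)}
    (hsep : ∀ j ∈ S, ∀ k ∈ S, j ≠ k → Δ ≤ torusDist (θ j) (θ k))
    (ω : EuclideanSpace ℝ (Fin d)) :
    (∑ ℓ ∈ S with Δ / 2 ≤ torusDist ω (θ ℓ), sqDirKer d m (ω - θ ℓ) ^ 2 ≤ 72 * d / β ^ 2) ∧
    (∑ ℓ ∈ S with Δ / 2 ≤ torusDist ω (θ ℓ), ‖gradient (sqDirKer d m) (ω - θ ℓ)‖ ^ 2 ≤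
      288 * π ^ 2 * d ^ 2 * m ^ 2 / β ^ 2) := by
  set T := S.filter fun ℓ ↦ Δ / 2 ≤ torusDist ω (θ ℓ)
  have hsepT : ∀ j ∈ T, ∀ k ∈ T, j ≠ k → Δ ≤ torusDist (θ j) (θ k) := fun j hj k hk ↦
    hsep j (mem_filter.1 hj).1 k (mem_filter.1 hk).1
  have hfar : ∀ ℓ ∈ T, Δ / 2 ≤ torusDist ω (θ ℓ) := fun ℓ hℓ ↦ (mem_filter.1 hℓ).2
  exact ⟨sum_sqDirKer_sq_le hβ0 hβ hΔ hsepT hfar,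
    sum_norm_gradient_sqDirKer_sq_le hβ0 hβ hΔ hsepT hfar⟩

end TensorKernels

end

/-- **Energy bounds for well-separated points on the torus.**
If `d ≥ 2`, `β ≥ 4π√d` and `θ_1, …, θ_s ∈ 𝕋^d` have minimum separation
`Δ ≥ β/m`, then for every `ω ∈ 𝕋^d`:
`∑_{ℓ : |ω-θ_ℓ| ≥ Δ/2} |D_m(ω-θ_ℓ)|² ≤ 16π²d²/β²` and
`∑_{ℓ : |ω-θ_ℓ| ≥ Δ/2} |∇D_m(ω-θ_ℓ)|² ≤ 64π⁴d³m²/β²`. -/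
theorem stmt9 (d : ℕ) (hd : 2 ≤ d) (m : ℕ) (hm : 1 ≤ m) (s : ℕ) (hs : 1 ≤ s)
    (β : ℝ) (hβ : 4 * Real.pi * Real.sqrt d ≤ β)
    (θ : Fin s → EuclideanSpace ℝ (Fin d)) (Δ : ℝ)
    (hΔsep : ∀ j k, j ≠ k → Δ ≤ torusDist (θ j) (θ k))
    (hΔβ : β / m ≤ Δ)
    (ω : EuclideanSpace ℝ (Fin d)) :
    (∑ ℓ ∈ Finset.univ.filter (fun ℓ => Δ / 2 ≤ torusDist ω (θ ℓ)),
        sqDirKer d m (ω - θ ℓ) ^ 2 ≤ 16 * Real.pi ^ 2 * (d : ℝ) ^ 2 / β ^ 2) ∧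
    (∑ ℓ ∈ Finset.univ.filter (fun ℓ => Δ / 2 ≤ torusDist ω (θ ℓ)),
        ‖gradient (sqDirKer d m) (ω - θ ℓ)‖ ^ 2
          ≤ 64 * Real.pi ^ 4 * (d : ℝ) ^ 3 * (m : ℝ) ^ 2 / β ^ 2) := by
  have hd1 : (1 : ℝ) ≤ d := mod_cast one_le_two.trans hd
  have hm0 : (0 : ℝ) < m := mod_cast hm
  have hβ0 : 0 < β := lt_of_lt_of_le (by positivity) hβ
  refine (stmt9_general hβ0 (seventyTwo_mul_le_sq_of_four_mul_pi_mul_sqrt_le d.cast_nonneg hβ)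
    ((div_le_iff₀' hm0).1 hΔβ) (fun j _ k _ ↦ hΔsep j k) ω).imp (le_trans' ?_) (le_trans' ?_)
  · gcongr ?_ / _
    exact seventyTwo_mul_le_sixteen_mul_pi_sq_mul_sq hd1
  · gcongr ?_ * _ / _
    exact mul_pi_sq_mul_sq_le_mul_pi_pow_four_mul_pow_three hd1

end
end
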